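/- arXiv:1510.04523 — 5 statements merged into one kernel-verified Lean document; each statement's English description precedes it below -/
import Mathlib

section
/- Let 1 ≤ n < N be integers, p > 1, and let K : (ℝ^N)^{n+2} → [0,∞) be such that K^p is a proper integrand. If E ⊂ ℝ^N is a Borel set with M_{K^p}(E) < ∞, then H^n(E ∩ B) < ∞ for every closed ball B ⊂ ℝ^N. -/
open MeasureTheory Metric Set
open scoped NNReal ENNReal

noncomputable section

/-- `x 0, …, x m` span an `(m,σ)`-simplex: the distance from each vertex to the affine
span of the remaining vertices is at least `σ`. -/
def IsHSimplex (N : ℕ) {m : ℕ} (σ : ℝ) (x : Fin (m + 1) → EuclideanSpace ℝ (Fin N)) : Prop :=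
  ∀ i : Fin (m + 1),
    σ ≤ Metric.infDist (x i)
      (affineSpan ℝ (x '' ({i}ᶜ : Set (Fin (m + 1)))) : Set (EuclideanSpace ℝ (Fin N)))

/-- The integral Menger curvature `M_{K^p}(μ) = ∫⋯∫ K^p dμ ⋯ dμ`. -/
def MengerEnergy (N n : ℕ) (p : ℝ) (K : (Fin (n + 2) → EuclideanSpace ℝ (Fin N)) → ℝ)
    (μ : Measure (EuclideanSpace ℝ (Fin N))) : ℝ≥0∞ :=
  ∫⁻ z, ENNReal.ofReal (K z ^ p) ∂(Measure.pi fun _ : Fin (n + 2) => μ)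

/-- `K^p` is a proper integrand. -/
def ProperIntegrand (N n : ℕ) (p : ℝ)
    (K : (Fin (n + 2) → EuclideanSpace ℝ (Fin N)) → ℝ) : Prop :=
  (∀ z, 0 ≤ K z) ∧ Measurable K ∧
  (∃ c : ℝ, 1 ≤ c ∧ ∃ l : ℝ, 1 ≤ l ∧
    ∀ t : ℝ, 0 < t → ∀ C : ℝ, 1 ≤ C → ∀ x : EuclideanSpace ℝ (Fin N),
      ∀ y : Fin (n + 1) → EuclideanSpace ℝ (Fin N),
        IsHSimplex N (t / C) y →
        convexHull ℝ (Set.range y) ⊆ Metric.closedBall x (C * t) →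
        ∀ w ∈ Metric.closedBall x (C * t),
          (Metric.infDist w (affineSpan ℝ (Set.range y) : Set (EuclideanSpace ℝ (Fin N))) / t) ^ p
            ≤ c * C ^ l * t ^ (n * (n + 1)) * K (Fin.snoc y w) ^ p) ∧
  (∀ t : ℝ, 0 < t → ∀ z : Fin (n + 2) → EuclideanSpace ℝ (Fin N),
      t ^ (n * (n + 1)) * K (fun i => t • z i) ^ p = K z ^ p) ∧
  (∀ b : EuclideanSpace ℝ (Fin N), ∀ z : Fin (n + 2) → EuclideanSpace ℝ (Fin N),
      K (fun i => z i + b) = K z)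

open Filter Function
open scoped Topology

/-!
Suppose the measure `μ`, the restriction of `μH[n]` to `E`, is infinite near a point `x₀`. The
support of `μ` does not lie in any `n`-plane, since `μ` is locally finite on such planes; hence `x₀`
is the first vertex of a nondegenerate `(n+1)`-simplex `x` with all vertices in the support. On a
small product neighbourhood of `x` the heights stay bounded away from zero, so `K ^ p` is bounded
from below by a positive constant there, whereas the product measure of the neighbourhood is
infinite: one factor is infinite and the others are positive. This makes the energy infinite.

As `μ` need not be σ-finite, the product formula for `Measure.pi` is not available; only the
inequality `∏ i, μ i (s i) ≤ Measure.pi μ (univ.pi s)` survives, and it is all that is needed.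
-/

theorem mul_measure_le_tsum_mul_measure {X κ : Type*} [MeasurableSpace X] [Countable κ]
    (μ : Measure X) {s : Set X} {t : κ → Set X} (ht : ∀ j, MeasurableSet (t j)) {b : ℝ≥0∞}
    {c : κ → ℝ≥0∞} (h : ∀ y ∈ s, b ≤ ∑' j, c j * (t j).indicator 1 y) :
    b * μ s ≤ ∑' j, c j * μ (t j) := by
  have hind : ∀ j, Measurable ((t j).indicator (1 : X → ℝ≥0∞)) := fun j =>
    measurable_one.indicator (ht j)
  have hmeas : ∀ j, Measurable fun y => c j * (t j).indicator 1 y := fun j =>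
    (hind j).const_mul _
  calc b * μ s = ∫⁻ _ in s, b ∂μ := (setLIntegral_const s b).symm
    _ ≤ ∫⁻ y in s, ∑' j, c j * (t j).indicator 1 y ∂μ :=
        setLIntegral_mono (Measurable.tsum hmeas) h
    _ ≤ ∫⁻ y, ∑' j, c j * (t j).indicator 1 y ∂μ := setLIntegral_le_lintegral _ _
    _ = ∑' j, ∫⁻ y, c j * (t j).indicator 1 y ∂μ :=
        lintegral_tsum fun j => (hmeas j).aemeasurable
    _ = ∑' j, c j * μ (t j) := tsum_congr fun j => by
        rw [lintegral_const_mul _ (hind j), lintegral_indicator_one (ht j)]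

section ProductMeasure

variable {ι : Type*} [Fintype ι] {X : ι → Type*} [∀ i, MeasurableSpace (X i)]

/- The coordinates are integrated out one at a time: those in `u` have been, the others are frozen
at `x`. -/
theorem prod_measure_le_tsum_prod_mul_prod_indicator {κ : Type*} [Countable κ] [DecidableEq ι]
    (μ : ∀ i, Measure (X i)) {s : ∀ i, Set (X i)} {t : κ → ∀ i, Set (X i)}
    (ht : ∀ j i, MeasurableSet (t j i)) (hst : univ.pi s ⊆ ⋃ j, univ.pi (t j))
    (u : Finset ι) {x : ∀ i, X i} (hx : ∀ i ∉ u, x i ∈ s i) :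
    ∏ i ∈ u, μ i (s i) ≤
      ∑' j, (∏ i ∈ u, μ i (t j i)) * ∏ i ∈ uᶜ, (t j i).indicator 1 (x i) := by
  induction u using Finset.induction_on generalizing x with
  | empty =>
    obtain ⟨j, hj⟩ := mem_iUnion.1 (hst fun i _ => hx i (Finset.notMem_empty i))
    refine le_trans ?_ (ENNReal.le_tsum j)
    simp [fun i => hj i (mem_univ i)]
  | insert i u hi ih =>
    let c : κ → ℝ≥0∞ := fun j =>
      (∏ k ∈ u, μ k (t j k)) * ∏ k ∈ (insert i u)ᶜ, (t j k).indicator 1 (x k)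
    have hcover : ∀ y ∈ s i, ∏ k ∈ u, μ k (s k) ≤ ∑' j, c j * (t j i).indicator 1 y := by
      intro y hy
      refine (ih (x := update x i y) fun k hk => ?_).trans_eq (tsum_congr fun j => ?_)
      · obtain rfl | hki := eq_or_ne k i
        · simpa using hy
        · simpa [hki] using hx k (by simp [hki, hk])
      · rw [← Finset.prod_erase_mul uᶜ _ (Finset.mem_compl.2 hi), ← Finset.compl_insert, mul_assoc,
          update_self]
        congr 2
        refine Finset.prod_congr rfl fun k hk => ?_
        rw [update_of_ne (by rintro rfl; simp at hk)]
    calc ∏ k ∈ insert i u, μ k (s k) = (∏ k ∈ u, μ k (s k)) * μ i (s i) := by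
          rw [Finset.prod_insert hi, mul_comm]
      _ ≤ ∑' j, c j * μ i (t j i) :=
          mul_measure_le_tsum_mul_measure (μ i) (fun j => ht j i) hcover
      _ = ∑' j, (∏ k ∈ insert i u, μ k (t j k)) *
            ∏ k ∈ (insert i u)ᶜ, (t j k).indicator 1 (x k) :=
          tsum_congr fun j => by rw [Finset.prod_insert hi]; ring

theorem prod_measure_le_tsum_prod_measure {κ : Type*} [Countable κ] (μ : ∀ i, Measure (X i))
    {s : ∀ i, Set (X i)} {t : κ → ∀ i, Set (X i)} (hst : univ.pi s ⊆ ⋃ j, univ.pi (t j)) :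
    ∏ i, μ i (s i) ≤ ∑' j, ∏ i, μ i (t j i) := by
  classical
  obtain hs | ⟨x, -⟩ := (univ.pi s).eq_empty_or_nonempty
  · obtain ⟨i, hi⟩ := univ_pi_eq_empty_iff.1 hs
    rw [Finset.prod_eq_zero (Finset.mem_univ i) (by rw [hi, measure_empty])]
    exact zero_le
  have hst' : univ.pi s ⊆ ⋃ j, univ.pi fun i => toMeasurable (μ i) (t j i) :=
    hst.trans (iUnion_mono fun j => pi_mono fun i _ => subset_toMeasurable _ _)
  simpa using prod_measure_le_tsum_prod_mul_prod_indicator μ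
    (fun j i => measurableSet_toMeasurable (μ i) (t j i)) hst' Finset.univ (x := x) (by simp)

theorem prod_measure_le_measure_pi (μ : ∀ i, Measure (X i)) (s : ∀ i, Set (X i)) :
    ∏ i, μ i (s i) ≤ Measure.pi μ (univ.pi s) := by
  rw [Measure.pi]
  refine le_trans ?_ (le_toMeasure_apply _ _ _)
  rw [OuterMeasure.pi, OuterMeasure.boundedBy_apply]
  refine le_iInf₂ fun t ht => ?_
  have hcover : univ.pi s ⊆ ⋃ j : {j // (t j).Nonempty}, univ.pi fun i => eval i '' t j :=
    fun x hx => by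
      obtain ⟨j, hj⟩ := mem_iUnion.1 (ht hx)
      exact mem_iUnion.2 ⟨⟨j, x, hj⟩, fun i _ => ⟨x, hj, rfl⟩⟩
  calc ∏ i, μ i (s i) ≤ ∑' j : {j // (t j).Nonempty}, ∏ i, μ i (eval i '' t j) :=
        prod_measure_le_tsum_prod_measure μ hcover
    _ = ∑' j : {j // (t j).Nonempty}, ⨆ _ : (t j).Nonempty,
          piPremeasure (fun i => (μ i).toOuterMeasure) (t j) :=
        tsum_congr fun j => by simp [j.2, piPremeasure]
    _ ≤ _ := ENNReal.tsum_comp_le_tsum_of_injective Subtype.val_injective _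

theorem finiteAtFilter_nhds_of_pi [∀ i, TopologicalSpace (X i)] {μ : ∀ i, Measure (X i)}
    {x : ∀ i, X i} (hx : ∀ i, x i ∈ (μ i).support)
    (h : (Measure.pi μ).FiniteAtFilter (𝓝 x)) (i : ι) : (μ i).FiniteAtFilter (𝓝 (x i)) := by
  classical
  obtain ⟨W, hW, hWμ⟩ := h
  rw [nhds_pi, Filter.mem_pi'] at hW
  obtain ⟨I, t, ht, htW⟩ := hW
  have hprod : ∏ j, μ j (t j) < ⊤ :=
    (prod_measure_le_measure_pi μ t).trans_lt
      ((measure_mono ((pi_mono' (fun _ _ => Subset.rfl) (subset_univ _)).trans htW)).trans_lt hWμ)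
  refine ⟨t i, ht i, ?_⟩
  rw [← Finset.mul_prod_erase Finset.univ _ (Finset.mem_univ i)] at hprod
  exact ENNReal.lt_top_of_mul_ne_top_left hprod.ne <| Finset.prod_ne_zero_iff.2 fun j _ =>
    ((Measure.mem_support_iff_forall _).1 (hx j) _ (ht j)).ne'

end ProductMeasure

theorem finiteAtFilter_nhds_of_lintegral_lt_top {X : Type*} [TopologicalSpace X]
    [MeasurableSpace X] [OpensMeasurableSpace X] {μ : Measure X} {F : X → ℝ≥0∞} {x : X} {δ : ℝ≥0∞}
    (hδ : 0 < δ) (hF : ∀ᶠ y in 𝓝 x, δ ≤ F y) (hfin : ∫⁻ y, F y ∂μ < ⊤) :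
    μ.FiniteAtFilter (𝓝 x) := by
  obtain ⟨U, hUF, hU, hxU⟩ := eventually_nhds_iff.1 hF
  refine ⟨U, hU.mem_nhds hxU, ENNReal.lt_top_of_mul_ne_top_right (a := δ) (ne_of_lt ?_) hδ.ne'⟩
  calc δ * μ U = ∫⁻ _ in U, δ ∂μ := (setLIntegral_const U δ).symm
    _ ≤ ∫⁻ y in U, F y ∂μ := setLIntegral_mono' hU.measurableSet hUF
    _ ≤ ∫⁻ y, F y ∂μ := setLIntegral_le_lintegral U F
    _ < ⊤ := hfin

section AffineSpace

variable {k V P : Type*} [DivisionRing k] [AddCommGroup V] [Module k V] [AddTorsor V P]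

theorem affineIndependent_snoc {n : ℕ} {x : Fin n → P} (hx : AffineIndependent k x) {z : P}
    (hz : z ∉ affineSpan k (range x)) :
    AffineIndependent k (Fin.snoc x z : Fin (n + 1) → P) := by
  refine AffineIndependent.affineIndependent_of_notMem_span (i := Fin.last n) ?_ ?_
  · rw [← affineIndependent_equiv (finSuccAboveEquiv (Fin.last n))]
    convert hx
    ext i
    simp [finSuccAboveEquiv_apply]
  · rw [Fin.snoc_last]
    refine fun h => hz (affineSpan_mono k ?_ h)
    rintro _ ⟨i, hi, rfl⟩
    obtain ⟨j, rfl⟩ := Fin.exists_castSucc_eq.2 hi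
    exact ⟨j, by simp⟩

theorem exists_affineIndependent_of_not_subset_affineSpan {s : Set P} {x₀ : P} (hx₀ : x₀ ∈ s)
    {n : ℕ} (hs : ∀ y : Fin n → P, ¬ s ⊆ affineSpan k (range y)) :
    ∃ x : Fin (n + 1) → P, x 0 = x₀ ∧ (∀ i, x i ∈ s) ∧ AffineIndependent k x := by
  induction n with
  | zero =>
    have : Subsingleton (Fin (0 + 1)) := Fin.subsingleton_one
    exact ⟨fun _ => x₀, rfl, fun _ => hx₀, affineIndependent_of_subsingleton k _⟩
  | succ n ih =>
    obtain ⟨x, rfl, hxs, hx⟩ := ih fun y hy => hs (Fin.snoc y x₀) <| hy.trans <|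
      affineSpan_mono k <| range_subset_iff.2 fun i => ⟨i.castSucc, by simp⟩
    obtain ⟨z, hzs, hz⟩ := not_subset.1 (hs x)
    refine ⟨Fin.snoc x z, Fin.snoc_castSucc (α := fun _ => P) z x 0, fun i => ?_,
      affineIndependent_snoc hx hz⟩
    cases i using Fin.lastCases with
    | last => simpa using hzs
    | cast i => simpa using hxs i

theorem isLocallyFiniteMeasure_of_lintegral_pi_lt_top [TopologicalSpace P]
    [SecondCountableTopology P] [MeasurableSpace P] [OpensMeasurableSpace P] {μ : Measure P}
    {n : ℕ} {F : (Fin (n + 1) → P) → ℝ≥0∞}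
    (hF : ∀ x, AffineIndependent k x → ∃ δ > 0, ∀ᶠ y in 𝓝 x, δ ≤ F y)
    (hplane : ∀ y : Fin n → P, IsLocallyFiniteMeasure (μ.restrict (affineSpan k (range y))))
    (hfin : ∫⁻ z, F z ∂(Measure.pi fun _ => μ) < ⊤) : IsLocallyFiniteMeasure μ := by
  by_contra hμ
  obtain ⟨x₀, hx₀⟩ : ∃ x₀, ¬ μ.FiniteAtFilter (𝓝 x₀) := by
    by_contra! h
    exact hμ ⟨h⟩
  have hx₀μ : x₀ ∈ μ.support := (Measure.mem_support_iff_forall x₀).2 fun U hU =>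
    pos_iff_ne_zero.2 fun hμU => hx₀ ⟨U, hU, by simp [hμU]⟩
  have hsupport : ∀ y : Fin n → P, ¬ μ.support ⊆ affineSpan k (range y) := fun y hy =>
    hμ <| Measure.restrict_eq_self_of_ae_mem (mem_of_superset Measure.support_mem_ae hy) ▸ hplane y
  obtain ⟨x, rfl, hxμ, hx⟩ := exists_affineIndependent_of_not_subset_affineSpan hx₀μ hsupport
  obtain ⟨δ, hδ, hxF⟩ := hF x hx
  exact hx₀ (finiteAtFilter_nhds_of_pi hxμ (finiteAtFilter_nhds_of_lintegral_lt_top hδ hxF hfin) 0)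

end AffineSpace

theorem exists_sub_eq_sum_smul_of_mem_affineSpan_image_compl {k V ι : Type*} [Ring k]
    [AddCommGroup V] [Module k V] [Fintype ι] {y : ι → V} {i : ι} {q : V}
    (hq : q ∈ affineSpan k (y '' {i}ᶜ)) :
    ∃ a : ι → k, a i = 1 ∧ ∑ j, a j = 0 ∧ y i - q = ∑ j, a j • y j := by
  classical
  obtain ⟨u, w, hu, hw, rfl⟩ := eq_affineCombination_of_mem_affineSpan_image hq
  replace hu : i ∉ u := fun hi => hu hi rfl
  refine ⟨Pi.single i 1 - indicator u w, by simp [hu], ?_, ?_⟩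
  · simp [Finset.sum_sub_distrib, Finset.sum_indicator_subset, hw]
  · rw [u.affineCombination_eq_linear_combination y w hw]
    simp only [Pi.sub_apply, sub_smul, Finset.sum_sub_distrib, Pi.single_apply, ite_smul, one_smul,
      zero_smul, Finset.sum_ite_eq', Finset.mem_univ, if_true, indicator_apply, SetLike.mem_coe,
      Finset.sum_ite_mem, Finset.univ_inter]

section Heights

variable {ι V : Type*} [Fintype ι] [NormedAddCommGroup V] [NormedSpace ℝ V]

theorem inv_le_infDist_affineSpan_image_compl [Nontrivial ι] {y : ι → V} {κ : ℝ} (hκ : 0 < κ)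
    (hy : ∀ a : ι → ℝ, ∑ j, a j = 0 → ‖a‖ ≤ κ * ‖∑ j, a j • y j‖) (i : ι) :
    κ⁻¹ ≤ infDist (y i) (affineSpan ℝ (y '' {i}ᶜ)) := by
  obtain ⟨j, hj⟩ := exists_ne i
  have hne : (affineSpan ℝ (y '' {i}ᶜ) : Set V).Nonempty :=
    ⟨y j, subset_affineSpan ℝ _ ⟨j, hj, rfl⟩⟩
  refine (le_infDist hne).2 fun q hq => ?_
  obtain ⟨a, hai, ha, hqa⟩ := exists_sub_eq_sum_smul_of_mem_affineSpan_image_compl hq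
  rw [dist_eq_norm, hqa, inv_le_iff_one_le_mul₀' hκ]
  calc (1 : ℝ) = ‖a i‖ := by rw [hai, norm_one]
    _ ≤ ‖a‖ := norm_le_pi_norm a i
    _ ≤ κ * ‖∑ j, a j • y j‖ := hy a ha

theorem exists_norm_le_mul_norm_sum_smul {x : ι → V} (hx : AffineIndependent ℝ x) :
    ∃ κ > 0, ∀ a : ι → ℝ, ∑ j, a j = 0 → ‖a‖ ≤ κ * ‖∑ j, a j • x j‖ := by
  let L : (ι → ℝ) →ₗ[ℝ] V × ℝ :=
    (Fintype.linearCombination ℝ x).prod (Fintype.linearCombination ℝ fun _ => (1 : ℝ))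
  have hL : ∀ a, L a = (∑ j, a j • x j, ∑ j, a j) := fun a => by
    simp [L, Fintype.linearCombination_apply]
  have hker : LinearMap.ker L = ⊥ := by
    refine LinearMap.ker_eq_bot'.2 fun a ha => ?_
    rw [hL, Prod.mk_eq_zero] at ha
    exact funext fun i => affineIndependent_iff.1 hx Finset.univ a ha.2 ha.1 i (Finset.mem_univ i)
  obtain ⟨κ, hκ, hanti⟩ := L.exists_antilipschitzWith hker
  refine ⟨κ, hκ, fun a ha => ?_⟩
  simpa [hL, ha] using hanti.le_mul_dist a 0

theorem exists_eventually_norm_le_mul_norm_sum_smul {x : ι → V} (hx : AffineIndependent ℝ x) :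
    ∃ κ > 0, ∀ᶠ y in 𝓝 x, ∀ a : ι → ℝ, ∑ j, a j = 0 → ‖a‖ ≤ κ * ‖∑ j, a j • y j‖ := by
  obtain ⟨κ, hκ, hbound⟩ := exists_norm_le_mul_norm_sum_smul hx
  refine ⟨2 * κ, by positivity, ?_⟩
  have hclose : ∀ᶠ y in 𝓝 x, ∑ j, ‖x j - y j‖ < 1 / (2 * κ) := by
    have hcont : Continuous fun y : ι → V => ∑ j, ‖x j - y j‖ := by fun_prop
    exact hcont.continuousAt.eventually_lt_const (by simpa using hκ)
  filter_upwards [hclose] with y hy a ha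
  have hdiff : ‖∑ j, a j • (x j - y j)‖ ≤ ‖a‖ * (1 / (2 * κ)) :=
    calc ‖∑ j, a j • (x j - y j)‖ ≤ ∑ j, ‖a‖ * ‖x j - y j‖ :=
          norm_sum_le_of_le _ fun j _ => by
            rw [norm_smul]
            gcongr
            exact norm_le_pi_norm a j
      _ = ‖a‖ * ∑ j, ‖x j - y j‖ := (Finset.mul_sum ..).symm
      _ ≤ ‖a‖ * (1 / (2 * κ)) := by gcongr
  have hhalf : ‖a‖ ≤ κ * ‖∑ j, a j • y j‖ + ‖a‖ / 2 :=
    calc ‖a‖ ≤ κ * ‖∑ j, a j • x j‖ := hbound a ha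
      _ = κ * ‖∑ j, a j • y j + ∑ j, a j • (x j - y j)‖ := by
          simp only [smul_sub, Finset.sum_sub_distrib, add_sub_cancel]
      _ ≤ κ * (‖∑ j, a j • y j‖ + ‖a‖ * (1 / (2 * κ))) := by
          gcongr
          exact (norm_add_le _ _).trans (by gcongr)
      _ = κ * ‖∑ j, a j • y j‖ + ‖a‖ / 2 := by field_simp
  linarith

end Heights

theorem exists_eventually_le_infDist_affineSpan_image_compl {ι V : Type*} [Finite ι] [Nontrivial ι]
    [NormedAddCommGroup V] [NormedSpace ℝ V] {x : ι → V} (hx : AffineIndependent ℝ x) :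
    ∃ σ > 0, ∀ᶠ y in 𝓝 x, ∀ i, σ ≤ infDist (y i) (affineSpan ℝ (y '' {i}ᶜ)) := by
  have := Fintype.ofFinite ι
  obtain ⟨κ, hκ, hbound⟩ := exists_eventually_norm_le_mul_norm_sum_smul hx
  exact ⟨κ⁻¹, inv_pos.2 hκ, hbound.mono fun y hy =>
    inv_le_infDist_affineSpan_image_compl hκ hy⟩

section HausdorffMeasure

variable {V : Type*} [NormedAddCommGroup V] [NormedSpace ℝ V] [FiniteDimensional ℝ V]
  [MeasurableSpace V] [BorelSpace V] {d : ℝ}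

theorem isLocallyFiniteMeasure_hausdorffMeasure (hd : Module.finrank ℝ V ≤ d) :
    IsLocallyFiniteMeasure (μH[d] : Measure V) :=
  Measure.isLocallyFiniteMeasure_of_le (Measure.le_iff'.2 (Measure.hausdorffMeasure_mono hd))

theorem isLocallyFiniteMeasure_hausdorffMeasure_restrict (S : AffineSubspace ℝ V)
    (hd : Module.finrank ℝ S.direction ≤ d) :
    IsLocallyFiniteMeasure (μH[d].restrict (S : Set V)) := by
  obtain hS | ⟨q, hq⟩ := (S : Set V).eq_empty_or_nonempty
  · rw [hS, Measure.restrict_empty]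
    infer_instance
  let f : S.direction → V := fun v => v + q
  have hf : Isometry f := (IsometryEquiv.addRight q).isometry.comp isometry_subtype_coe
  have hrange : range f = S := by
    ext z
    have hz := S.vsub_right_mem_direction_iff_mem hq z
    exact ⟨by rintro ⟨v, rfl⟩; exact S.vadd_mem_of_mem_direction v.2 hq,
      fun h => ⟨⟨z - q, hz.2 h⟩, sub_add_cancel z q⟩⟩
  have := isLocallyFiniteMeasure_hausdorffMeasure hd
  rw [← hrange, ← hf.map_hausdorffMeasure (Or.inl ((Nat.cast_nonneg _).trans hd))]
  refine ⟨fun x => ⟨ball x 1, ball_mem_nhds x one_pos, ?_⟩⟩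
  rw [Measure.map_apply hf.continuous.measurable measurableSet_ball]
  exact (hf.antilipschitz.isBounded_preimage isBounded_ball).measure_lt_top

end HausdorffMeasure

/-- `f` is bounded from below by a positive constant on the simplices with vertices in a given
ball and heights at least a given `σ > 0`. This is all that the argument retains of a proper
integrand. The norm on tuples is the maximum of the norms of the vertices. -/
def BoundedBelowOnFatSimplices {N m : ℕ} (f : (Fin (m + 1) → EuclideanSpace ℝ (Fin N)) → ℝ) :
    Prop :=
  ∀ σ > 0, ∀ r, ∃ δ > 0, ∀ z, IsHSimplex N σ z → ‖z‖ ≤ r → δ ≤ f z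

theorem BoundedBelowOnFatSimplices.exists_eventually_le {N m : ℕ} (hm : 1 ≤ m)
    {f : (Fin (m + 1) → EuclideanSpace ℝ (Fin N)) → ℝ} (hf : BoundedBelowOnFatSimplices f)
    {x : Fin (m + 1) → EuclideanSpace ℝ (Fin N)} (hx : AffineIndependent ℝ x) :
    ∃ δ > 0, ∀ᶠ y in 𝓝 x, δ ≤ f y := by
  have : Nontrivial (Fin (m + 1)) := Fin.nontrivial_iff_two_le.2 (by omega)
  obtain ⟨σ, hσ, hheight⟩ := exists_eventually_le_infDist_affineSpan_image_compl hx
  obtain ⟨δ, hδ, hbound⟩ := hf σ hσ (‖x‖ + 1)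
  have hnorm : ∀ᶠ y in 𝓝 x, ‖y‖ < ‖x‖ + 1 :=
    continuous_norm.continuousAt.eventually_lt_const (lt_add_one _)
  refine ⟨δ, hδ, ?_⟩
  filter_upwards [hheight, hnorm] with y hy hyr using hbound y hy hyr.le

theorem IsHSimplex.comp {N m k : ℕ} (hk : 1 ≤ k) {σ : ℝ}
    {x : Fin (m + 1) → EuclideanSpace ℝ (Fin N)} (hx : IsHSimplex N σ x)
    (e : Fin (k + 1) ↪ Fin (m + 1)) : IsHSimplex N σ (x ∘ e) := by
  have : Nontrivial (Fin (k + 1)) := Fin.nontrivial_iff_two_le.2 (by omega)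
  intro i
  obtain ⟨j, hj⟩ := exists_ne i
  refine (hx (e i)).trans (infDist_le_infDist_of_subset (affineSpan_mono ℝ ?_)
    ⟨_, subset_affineSpan ℝ _ ⟨j, hj, rfl⟩⟩)
  rw [image_comp]
  exact image_mono (by rintro _ ⟨j, hj, rfl⟩; exact fun h => hj (e.injective h))

theorem IsHSimplex.le_infDist_last {N m : ℕ} {σ : ℝ}
    {x : Fin (m + 2) → EuclideanSpace ℝ (Fin N)} (hx : IsHSimplex N σ x) :
    σ ≤ infDist (x (Fin.last (m + 1))) (affineSpan ℝ (range (Fin.init x))) := by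
  have hrange : range (Fin.init x) = x '' {Fin.last (m + 1)}ᶜ := by
    ext z
    simp [Fin.init, Fin.exists_fin_succ']
  rw [hrange]
  exact hx _

theorem ProperIntegrand.boundedBelowOnFatSimplices {N n : ℕ} (hn : 1 ≤ n) {p : ℝ} (hp : 0 ≤ p)
    {K : (Fin (n + 2) → EuclideanSpace ℝ (Fin N)) → ℝ} (hK : ProperIntegrand N n p K) :
    BoundedBelowOnFatSimplices fun z => K z ^ p := by
  obtain ⟨-, -, ⟨c, hc, l, -, hlow⟩, -, -⟩ := hK
  intro σ hσ r
  obtain ⟨C, hC1, hCσ, hCr⟩ : ∃ C : ℝ, 1 ≤ C ∧ 1 / σ ≤ C ∧ r ≤ C :=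
    ⟨max 1 (max (1 / σ) r), by simp⟩
  have hC0 : 0 < C := one_pos.trans_le hC1
  have hc0 : 0 < c * C ^ l := mul_pos (one_pos.trans_le hc) (Real.rpow_pos_of_pos hC0 l)
  refine ⟨σ ^ p / (c * C ^ l), div_pos (Real.rpow_pos_of_pos hσ p) hc0, fun z hz hzr => ?_⟩
  have hball : ∀ j, z j ∈ closedBall 0 (C * 1) := fun j => by
    simpa using (norm_le_pi_norm z j).trans (hzr.trans hCr)
  have hbase : IsHSimplex N (1 / C) (Fin.init z) := fun i =>
    ((one_div_le hC0 hσ).2 hCσ).trans (hz.comp hn Fin.castSuccEmb i)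
  have hhull : convexHull ℝ (range (Fin.init z)) ⊆ closedBall 0 (C * 1) :=
    convexHull_min (range_subset_iff.2 fun j => hball j.castSucc) (convex_closedBall _ _)
  have hupper := hlow 1 one_pos C hC1 0 (Fin.init z) hbase hhull (z (Fin.last _)) (hball _)
  rw [Fin.snoc_init_self, div_one, one_pow, mul_one] at hupper
  rw [div_le_iff₀' hc0]
  exact (Real.rpow_le_rpow hσ.le hz.le_infDist_last hp).trans hupper

theorem hausdorff_locally_finite_of_menger_finite_general {N n : ℕ} {p : ℝ}
    {K : (Fin (n + 2) → EuclideanSpace ℝ (Fin N)) → ℝ}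
    (hK : BoundedBelowOnFatSimplices fun z => K z ^ p) (E : Set (EuclideanSpace ℝ (Fin N)))
    (hfin : MengerEnergy N n p K (μH[(n : ℝ)].restrict E) < ⊤)
    (c : EuclideanSpace ℝ (Fin N)) (r : ℝ) : μH[(n : ℝ)] (E ∩ closedBall c r) < ⊤ := by
  have hlower : ∀ x, AffineIndependent ℝ x →
      ∃ δ > 0, ∀ᶠ y in 𝓝 x, δ ≤ ENNReal.ofReal (K y ^ p) := fun x hx => by
    obtain ⟨δ, hδ, hxK⟩ := hK.exists_eventually_le (by omega) hx
    exact ⟨_, ENNReal.ofReal_pos.2 hδ, hxK.mono fun _ => ENNReal.ofReal_le_ofReal⟩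
  have hplane : ∀ y : Fin (n + 1) → EuclideanSpace ℝ (Fin N), IsLocallyFiniteMeasure
      ((μH[(n : ℝ)].restrict E).restrict (affineSpan ℝ (range y))) := fun y => by
    have hdim : (Module.finrank ℝ (affineSpan ℝ (range y)).direction : ℝ) ≤ n := by
      rw [direction_affineSpan]
      exact_mod_cast finrank_vectorSpan_range_le ℝ y (Fintype.card_fin _)
    have := isLocallyFiniteMeasure_hausdorffMeasure_restrict _ hdim
    exact Measure.isLocallyFiniteMeasure_of_le
      (Measure.restrict_mono Subset.rfl Measure.restrict_le_self)
  have := isLocallyFiniteMeasure_of_lintegral_pi_lt_top hlower hplane hfin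
  rw [inter_comm, ← Measure.restrict_apply measurableSet_closedBall]
  exact measure_closedBall_lt_top

/-- **Lemma.** Let `1 ≤ n < N`, `p > 1` and let `K^p` be a proper integrand.  If `E ⊆ ℝ^N`
is a Borel set with `M_{K^p}(E) < ∞`, then `H^n(E ∩ B) < ∞` for every closed ball `B`. -/
theorem hausdorff_locally_finite_of_menger_finite {N n : ℕ} (hn : 1 ≤ n) (hnN : n < N)
    (p : ℝ) (hp : 1 < p)
    (K : (Fin (n + 2) → EuclideanSpace ℝ (Fin N)) → ℝ)
    (hK : ProperIntegrand N n p K)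
    (E : Set (EuclideanSpace ℝ (Fin N))) (hE : MeasurableSet E)
    (hfin : MengerEnergy N n p K (μH[(n : ℝ)].restrict E) < ⊤) :
    ∀ (c : EuclideanSpace ℝ (Fin N)) (r : ℝ),
      μH[(n : ℝ)] (E ∩ Metric.closedBall c r) < ⊤ := by
  exact hausdorff_locally_finite_of_menger_finite_general
    (hK.boundedBelowOnFatSimplices hn (zero_le_one.trans hp.le)) E hfin

end
end

section
/- Let 1 ≤ n < N be integers, p > 1, and let K : (ℝ^N)^{n+2} → [0,∞) be such that K^p is a proper integrand. Then there exists a function K̃ : (ℝ^N)^{n+2} → [0,∞) such that K̃^p is a proper integrand, K̃ is symmetric (invariant under every permutation of its n+2 arguments), and M_{K̃^p}(E) = M_{K^p}(E) for every Borel set E ⊂ ℝ^N. -/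
open MeasureTheory Metric Set
open scoped NNReal ENNReal

noncomputable section

/-- `K` is symmetric: invariant under every permutation of its `n+2` arguments. -/
def SymmetricKernel (N n : ℕ) (K : (Fin (n + 2) → EuclideanSpace ℝ (Fin N)) → ℝ) : Prop :=
  ∀ (σ : Equiv.Perm (Fin (n + 2))) (z : Fin (n + 2) → EuclideanSpace ℝ (Fin N)), K (z ∘ σ) = K z

/-!
`K̃` is the `L^p` mean of `K` over all orderings of its `n + 2` arguments. Since `K ^ p` is bounded
by `(n + 2)!` times the mean of its permuted copies, the lower bound for `K` passes to `K̃` with a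
larger constant, while scaling and translation commute with permutations. Each permuted copy has the
same energy because a power of a measure is invariant under permutations of the coordinates. As
`μH[n].restrict E` need not be `σ`-finite, that invariance cannot come from uniqueness of the
product measure; instead `Measure.pi μ` is characterised as the largest measure bounded by the
product of the `μ i` on boxes, a property that is preserved by reindexing.
-/

section PiMeasure

theorem measurable_pi_comp {ι κ : Type*} {α : κ → Type*} [∀ k, MeasurableSpace (α k)]
    (e : ι → κ) : Measurable fun (z : ∀ k, α k) i => z (e i) :=
  measurable_pi_lambda _ fun i => measurable_pi_apply (e i)

variable {ι κ : Type*} [Fintype ι] [Fintype κ]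

theorem pi_univ_pi_le_prod {α : ι → Type*} [∀ i, MeasurableSpace (α i)] (μ : ∀ i, Measure (α i))
    {s : ∀ i, Set (α i)} (hs : ∀ i, MeasurableSet (s i)) :
    Measure.pi μ (univ.pi s) ≤ ∏ i, μ i (s i) := by
  rw [Measure.pi, toMeasure_apply _ _ (.univ_pi hs)]
  exact OuterMeasure.pi_pi_le _ _

theorem le_pi_of_forall_univ_pi_le_prod {α : ι → Type*} [∀ i, MeasurableSpace (α i)]
    {μ : ∀ i, Measure (α i)} {ν : Measure (∀ i, α i)}
    (h : ∀ s : ∀ i, Set (α i), (∀ i, MeasurableSet (s i)) → ν (univ.pi s) ≤ ∏ i, μ i (s i)) :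
    ν ≤ Measure.pi μ := by
  have hν : ν.toOuterMeasure ≤ OuterMeasure.pi fun i => (μ i).toOuterMeasure := by
    refine OuterMeasure.le_pi.2 fun s _ => ?_
    calc ν (univ.pi s)
        ≤ ν (univ.pi fun i => toMeasurable (μ i) (s i)) :=
          measure_mono (pi_mono fun i _ => subset_toMeasurable _ _)
      _ ≤ ∏ i, μ i (toMeasurable (μ i) (s i)) := h _ fun i => measurableSet_toMeasurable _ _
      _ = ∏ i, μ i (s i) := by simp only [measure_toMeasurable]
  refine Measure.le_iff.2 fun A hA => (hν A).trans_eq ?_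
  rw [Measure.pi, toMeasure_apply _ _ hA]

variable {α : κ → Type*} [∀ k, MeasurableSpace (α k)]

theorem map_piCongrLeft_pi_le (μ : ∀ k, Measure (α k)) (e : ι ≃ κ) :
    (Measure.pi fun i => μ (e i)).map (MeasurableEquiv.piCongrLeft α e) ≤ Measure.pi μ := by
  refine le_pi_of_forall_univ_pi_le_prod fun s hs => ?_
  rw [MeasurableEquiv.map_apply, MeasurableEquiv.coe_piCongrLeft,
    Equiv.piCongrLeft_preimage_univ_pi, ← e.prod_comp]
  exact pi_univ_pi_le_prod _ fun i => hs (e i)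

theorem map_pi_comp_equiv_le (μ : ∀ k, Measure (α k)) (e : ι ≃ κ) :
    (Measure.pi μ).map (fun z i => z (e i)) ≤ Measure.pi fun i => μ (e i) := by
  refine le_pi_of_forall_univ_pi_le_prod fun s hs => ?_
  obtain ⟨t, rfl⟩ : ∃ t : ∀ k, Set (α k), (fun i => t (e i)) = s :=
    (Equiv.piCongrLeft (fun k => Set (α k)) e).symm.surjective s
  have hbox : (fun (z : ∀ k, α k) i => z (e i)) ⁻¹' (univ.pi fun i => t (e i)) = univ.pi t := by
    ext z
    simp only [mem_preimage, mem_univ_pi]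
    exact (e.surjective.forall (p := fun k => z k ∈ t k)).symm
  rw [Measure.map_apply (measurable_pi_comp e) (.univ_pi hs), hbox,
    e.prod_comp fun k => μ k (t k)]
  exact pi_univ_pi_le_prod μ (e.surjective.forall.2 hs)

/-- Unlike `measurePreserving_piCongrLeft`, this needs no `σ`-finiteness. -/
theorem measurePreserving_pi_comp_equiv (μ : ∀ k, Measure (α k)) (e : ι ≃ κ) :
    MeasurePreserving (fun (z : ∀ k, α k) i => z (e i)) (Measure.pi μ)
      (Measure.pi fun i => μ (e i)) := by
  refine ⟨measurable_pi_comp e, (map_pi_comp_equiv_le μ e).antisymm ?_⟩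
  calc Measure.pi (fun i => μ (e i))
      = ((Measure.pi fun i => μ (e i)).map (MeasurableEquiv.piCongrLeft α e)).map
          (fun z i => z (e i)) :=
        (MeasurableEquiv.piCongrLeft α e).symm.map_map_symm.symm
    _ ≤ (Measure.pi μ).map fun z i => z (e i) :=
        Measure.map_mono (map_piCongrLeft_pi_le μ e) (measurable_pi_comp e)

end PiMeasure

section Symmetrization

open scoped BigOperators

theorem lintegral_ofReal_expect_comp {G X Y : Type*} [Fintype G] [Nonempty G] [MeasurableSpace X]
    [MeasurableSpace Y] {μ : Measure X} {ν : Measure Y} {f : Y → ℝ} {g : G → X → Y}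
    (hf : Measurable f) (hf₀ : ∀ y, 0 ≤ f y) (hg : ∀ a, MeasurePreserving (g a) μ ν) :
    ∫⁻ x, ENNReal.ofReal (𝔼 a, f (g a x)) ∂μ = ∫⁻ y, ENNReal.ofReal (f y) ∂ν := by
  have hcard : (Fintype.card G : ℝ≥0∞) ≠ 0 := Nat.cast_ne_zero.2 Fintype.card_ne_zero
  rw [← ENNReal.mul_right_inj hcard (ENNReal.natCast_ne_top _),
    ← lintegral_const_mul' _ _ (ENNReal.natCast_ne_top _)]
  calc ∫⁻ x, Fintype.card G * ENNReal.ofReal (𝔼 a, f (g a x)) ∂μ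
      = ∫⁻ x, ∑ a, ENNReal.ofReal (f (g a x)) ∂μ := by
        refine lintegral_congr fun x => ?_
        rw [← ENNReal.ofReal_natCast, ← ENNReal.ofReal_mul (Nat.cast_nonneg _),
          Fintype.card_mul_expect, ENNReal.ofReal_sum_of_nonneg fun a _ => hf₀ (g a x)]
    _ = ∑ a, ∫⁻ x, ENNReal.ofReal (f (g a x)) ∂μ :=
        lintegral_finsetSum _ fun a _ => (hf.comp (hg a).measurable).ennreal_ofReal
    _ = ∑ _a : G, ∫⁻ y, ENNReal.ofReal (f y) ∂ν :=
        Finset.sum_congr rfl fun a _ => (hg a).lintegral_comp hf.ennreal_ofReal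
    _ = Fintype.card G * ∫⁻ y, ENNReal.ofReal (f y) ∂ν := by
        rw [Finset.sum_const, Finset.card_univ, nsmul_eq_mul]

variable {ι α : Type*} [Fintype ι] [DecidableEq ι] {p : ℝ} {K : (ι → α) → ℝ}

/-- The `L^p` mean of `K` over all orderings of its arguments. The power `p` is averaged, rather
than `K` itself, so that the integral of `K ^ p` does not change. -/
def symmetrization (p : ℝ) (K : (ι → α) → ℝ) (z : ι → α) : ℝ :=
  (𝔼 σ : Equiv.Perm ι, K (z ∘ σ) ^ p) ^ p⁻¹

theorem expect_rpow_comp_perm_nonneg (hK : ∀ z, 0 ≤ K z) (z : ι → α) :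
    0 ≤ 𝔼 σ : Equiv.Perm ι, K (z ∘ σ) ^ p :=
  Finset.expect_nonneg fun _ _ => Real.rpow_nonneg (hK _) p

theorem symmetrization_nonneg (hK : ∀ z, 0 ≤ K z) (z : ι → α) : 0 ≤ symmetrization p K z :=
  Real.rpow_nonneg (expect_rpow_comp_perm_nonneg hK z) _

theorem symmetrization_rpow (hp : p ≠ 0) (hK : ∀ z, 0 ≤ K z) (z : ι → α) :
    symmetrization p K z ^ p = 𝔼 σ : Equiv.Perm ι, K (z ∘ σ) ^ p :=
  Real.rpow_inv_rpow (expect_rpow_comp_perm_nonneg hK z) hp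

theorem rpow_le_card_mul_symmetrization_rpow (hp : p ≠ 0) (hK : ∀ z, 0 ≤ K z) (z : ι → α) :
    K z ^ p ≤ Fintype.card (Equiv.Perm ι) * symmetrization p K z ^ p := by
  rw [symmetrization_rpow hp hK, Fintype.card_mul_expect]
  exact Finset.single_le_sum (f := fun σ : Equiv.Perm ι => K (z ∘ σ) ^ p)
    (fun _ _ => Real.rpow_nonneg (hK _) p) (Finset.mem_univ 1)

theorem symmetrization_comp_perm (τ : Equiv.Perm ι) (z : ι → α) :
    symmetrization p K (z ∘ τ) = symmetrization p K z :=
  congrArg (· ^ p⁻¹) <| Fintype.expect_equiv (Equiv.mulLeft τ) _ _ fun _ => rfl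

theorem symmetrization_comp_left {g : α → α} (h : ∀ z, K (g ∘ z) = K z) (z : ι → α) :
    symmetrization p K (g ∘ z) = symmetrization p K z := by
  simp only [symmetrization, Function.comp_assoc, h]

theorem mul_symmetrization_comp_left_rpow (hp : p ≠ 0) (hK : ∀ z, 0 ≤ K z) {a : ℝ} {g : α → α}
    (h : ∀ z, a * K (g ∘ z) ^ p = K z ^ p) (z : ι → α) :
    a * symmetrization p K (g ∘ z) ^ p = symmetrization p K z ^ p := by
  simp only [symmetrization_rpow hp hK, Finset.mul_expect, Function.comp_assoc, h]

variable [MeasurableSpace α]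

theorem measurable_symmetrization (hK : Measurable K) : Measurable (symmetrization p K) := by
  have hKσ (σ : Equiv.Perm ι) : Measurable fun z => K (z ∘ σ) := hK.comp (measurable_pi_comp σ)
  unfold symmetrization
  simp only [Fintype.expect_eq_sum_div_card]
  exact ((Finset.measurable_sum _ fun σ _ => (hKσ σ).pow_const p).div_const _).pow_const _

theorem lintegral_symmetrization_rpow (hp : p ≠ 0) (hK : ∀ z, 0 ≤ K z) (hm : Measurable K)
    (μ : Measure α) :
    ∫⁻ z, ENNReal.ofReal (symmetrization p K z ^ p) ∂(Measure.pi fun _ : ι => μ) =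
      ∫⁻ z, ENNReal.ofReal (K z ^ p) ∂(Measure.pi fun _ : ι => μ) := by
  simp only [symmetrization_rpow hp hK]
  exact lintegral_ofReal_expect_comp (hm.pow_const p) (fun z => Real.rpow_nonneg (hK z) p)
    fun σ => measurePreserving_pi_comp_equiv (fun _ => μ) σ

end Symmetrization

theorem properIntegrand_symmetrization {N n : ℕ} {p : ℝ} (hp : p ≠ 0)
    {K : (Fin (n + 2) → EuclideanSpace ℝ (Fin N)) → ℝ} (hK : ProperIntegrand N n p K) :
    ProperIntegrand N n p (symmetrization p K) := by
  obtain ⟨hnonneg, hmeas, ⟨c, hc, l, hl, hlower⟩, hscale, htrans⟩ := hK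
  set M : ℝ := (Fintype.card (Equiv.Perm (Fin (n + 2))) : ℝ)
  have hM : 1 ≤ M := Nat.one_le_cast.2 Fintype.card_pos
  refine ⟨symmetrization_nonneg hnonneg, measurable_symmetrization hmeas,
    ⟨c * M, one_le_mul_of_one_le_of_one_le hc hM, l, hl, fun t ht C hC x y hy hyB w hw => ?_⟩,
    fun t ht => mul_symmetrization_comp_left_rpow hp hnonneg (g := (t • ·)) (hscale t ht),
    fun b => symmetrization_comp_left (g := (· + b)) (htrans b)⟩
  calc (infDist w (affineSpan ℝ (range y) : Set (EuclideanSpace ℝ (Fin N))) / t) ^ p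
      ≤ c * C ^ l * t ^ (n * (n + 1)) * K (Fin.snoc y w) ^ p := hlower t ht C hC x y hy hyB w hw
    _ ≤ c * C ^ l * t ^ (n * (n + 1)) * (M * symmetrization p K (Fin.snoc y w) ^ p) := by
        gcongr
        exact rpow_le_card_mul_symmetrization_rpow hp hnonneg _
    _ = c * M * C ^ l * t ^ (n * (n + 1)) * symmetrization p K (Fin.snoc y w) ^ p := by
        ring

theorem exists_symmetric_proper_integrand_general {N n : ℕ} {p : ℝ} (hp : 0 < p)
    {K : (Fin (n + 2) → EuclideanSpace ℝ (Fin N)) → ℝ} (hK : ProperIntegrand N n p K) :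
    ∃ Kt : (Fin (n + 2) → EuclideanSpace ℝ (Fin N)) → ℝ,
      ProperIntegrand N n p Kt ∧ SymmetricKernel N n Kt ∧
      ∀ μ : Measure (EuclideanSpace ℝ (Fin N)), MengerEnergy N n p Kt μ = MengerEnergy N n p K μ :=
  ⟨symmetrization p K, properIntegrand_symmetrization hp.ne' hK, symmetrization_comp_perm,
    lintegral_symmetrization_rpow hp.ne' hK.1 hK.2.1⟩

/-- **Lemma (symmetrization).** Let `1 ≤ n < N`, `p > 1` and let `K^p` be a proper
integrand.  There exists a symmetric `K̃` such that `K̃^p` is a proper integrand and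
`M_{K̃^p}(E) = M_{K^p}(E)` for every Borel set `E ⊆ ℝ^N`. -/
theorem exists_symmetric_proper_integrand {N n : ℕ} (hn : 1 ≤ n) (hnN : n < N)
    (p : ℝ) (hp : 1 < p)
    (K : (Fin (n + 2) → EuclideanSpace ℝ (Fin N)) → ℝ)
    (hK : ProperIntegrand N n p K) :
    ∃ Kt : (Fin (n + 2) → EuclideanSpace ℝ (Fin N)) → ℝ,
      ProperIntegrand N n p Kt ∧ SymmetricKernel N n Kt ∧
      ∀ E : Set (EuclideanSpace ℝ (Fin N)), MeasurableSet E →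
        MengerEnergy N n p Kt (μH[(n : ℝ)].restrict E)
          = MengerEnergy N n p K (μH[(n : ℝ)].restrict E) := by
  obtain ⟨Kt, hKt, hsymm, henergy⟩ :=
    exists_symmetric_proper_integrand_general (zero_lt_one.trans hp) hK
  exact ⟨Kt, hKt, hsymm, fun E _ => henergy (μH[(n : ℝ)].restrict E)⟩

end
end

section
/- Let 0 < h < H, let 1 ≤ m ≤ N+1, and let y_0, x_0, x_1, …, x_m ∈ ℝ^N. If Δ(x_0,…,x_m) is an (m,H)-simplex and |y_0 − x_0| ≤ h, then Δ(y_0, x_1, …, x_m) is an (m, H−h)-simplex. -/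
open MeasureTheory Metric Set
open scoped NNReal ENNReal

noncomputable section

/-!
Moving the vertex `b` to `b'` changes the height over `b` by at most `h`. For the height over
another vertex `a`, take a point `p` of the new opposite face and let `t` be the weight of `b'` in
it. If `|t| ≤ 1`, putting `b` back in place of `b'` moves `p` by at most `h`, to a point of the old
face, which is at distance at least `H` from `a`. If `|t| ≥ 1`, solving for `b'` with `a` in place
of `p` gives a point of the face opposite `b'`; it is at distance at most `dist a p` from `b'`, and
at least `H - h` because `b` is at distance at least `H` from that face.
-/

section AffineSpan

variable {𝕜 V P : Type*} [Field 𝕜] [AddCommGroup V] [Module 𝕜 V] [AddTorsor V P]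

/- The scalar `t` is the weight of `b` in an affine combination giving `p`. The first clause
replaces `b` by `c` in this combination; the second solves it for `b` after replacing `p` by `c`. -/
theorem exists_weight_of_mem_affineSpan_insert {S : Set P} {b p : P}
    (hp : p ∈ affineSpan 𝕜 (insert b S)) :
    ∃ t : 𝕜, (∀ c, t • (c -ᵥ b) +ᵥ p ∈ affineSpan 𝕜 (insert c S)) ∧
      (t ≠ 0 → ∀ c, t⁻¹ • (c -ᵥ p) +ᵥ b ∈ affineSpan 𝕜 (insert c S)) := by
  rcases S.eq_empty_or_nonempty with rfl | ⟨o, ho⟩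
  · obtain rfl : p = b := by simpa using hp
    exact ⟨1, by simp⟩
  have hoS : o ∈ affineSpan 𝕜 S := subset_affineSpan 𝕜 S ho
  have mem_insert_iff (c q : P) : q ∈ affineSpan 𝕜 (insert c S) ↔
      ∃ r : 𝕜, ∃ q₀ ∈ affineSpan 𝕜 S, q = r • (c -ᵥ o) +ᵥ q₀ := by
    rw [← affineSpan_insert_affineSpan, AffineSubspace.mem_affineSpan_insert_iff hoS]
  obtain ⟨t, q, hq, rfl⟩ := (mem_insert_iff b p).1 hp
  refine ⟨t, fun c => (mem_insert_iff c _).2 ⟨t, q, hq, ?_⟩, fun ht c =>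
    (mem_insert_iff c _).2 ⟨t⁻¹, t⁻¹ • (o -ᵥ q) +ᵥ o, ?_, ?_⟩⟩
  · rw [vadd_vadd, ← smul_add, vsub_add_vsub_cancel]
  · exact AffineSubspace.smul_vsub_vadd_mem _ _ hoS hq hoS
  · rw [vsub_vadd_eq_vsub_sub, smul_sub, inv_smul_smul₀ ht, vadd_vadd, ← smul_add,
      vsub_add_vsub_cancel, sub_eq_add_neg, neg_vsub_eq_vsub_rev, add_vadd, vsub_vadd]

end AffineSpan

theorem image_compl_singleton_eq_insert {α β : Type*} (f : α → β) {i j : α} (hij : i ≠ j) :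
    f '' {i}ᶜ = insert (f j) (f '' {i, j}ᶜ) := by
  rw [← image_insert_eq]
  congr 1
  grind

section NormedAddTorsor

variable {𝕜 V P : Type*} [NormedField 𝕜] [SeminormedAddCommGroup V] [NormedSpace 𝕜 V]
  [PseudoMetricSpace P] [NormedAddTorsor V P]

theorem sub_le_dist_of_mem_affineSpan_insert {S : Set P} {a b b' p : P} {h H : ℝ}
    (ha : ∀ q ∈ affineSpan 𝕜 (insert b S), H ≤ dist a q)
    (hb : ∀ q ∈ affineSpan 𝕜 (insert a S), H ≤ dist b q)
    (hbb' : dist b' b ≤ h) (hp : p ∈ affineSpan 𝕜 (insert b' S)) :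
    H - h ≤ dist a p := by
  obtain ⟨t, replace_vertex, solve_vertex⟩ := exists_weight_of_mem_affineSpan_insert hp
  rcases le_total ‖t‖ 1 with ht | ht
  · have hmove : dist p (t • (b -ᵥ b') +ᵥ p) ≤ h := calc
      _ = ‖t‖ * dist b' b := by rw [dist_vadd_right, norm_smul, dist_comm, dist_eq_norm_vsub V]
      _ ≤ dist b' b := mul_le_of_le_one_left dist_nonneg ht
      _ ≤ h := hbb'
    linarith [ha _ (replace_vertex b), dist_triangle a p (t • (b -ᵥ b') +ᵥ p)]
  · have ht₀ : t ≠ 0 := norm_pos_iff.1 (one_pos.trans_le ht)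
    have hmove : dist b' (t⁻¹ • (a -ᵥ p) +ᵥ b') ≤ dist a p := calc
      _ = ‖t‖⁻¹ * dist a p := by rw [dist_vadd_right, norm_smul, norm_inv, dist_eq_norm_vsub V]
      _ ≤ dist a p := mul_le_of_le_one_left dist_nonneg (inv_le_one_of_one_le₀ ht)
    linarith [hb _ (solve_vertex ht₀ a), dist_triangle_left b (t⁻¹ • (a -ᵥ p) +ᵥ b') b']

variable {ι : Type*}

variable (𝕜) in
/-- The family `x` spans a simplex with all heights at least `σ`, in an arbitrary affine space. The
heights are bounded point by point: the face opposite the vertex of a one-point family is empty and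
imposes no condition, whereas `Metric.infDist` to the empty set is `0`. -/
def HeightsAtLeast (σ : ℝ) (x : ι → P) : Prop :=
  ∀ i, ∀ p ∈ affineSpan 𝕜 (x '' {i}ᶜ), σ ≤ dist (x i) p

theorem isHSimplex_update_general [DecidableEq ι] {h H : ℝ} {x : ι → P} {k : ι} {y : P}
    (hx : HeightsAtLeast 𝕜 H x) (hy : dist y (x k) ≤ h) :
    HeightsAtLeast 𝕜 (H - h) (Function.update x k y) := by
  have image_update {s : Set ι} (hs : k ∉ s) : Function.update x k y '' s = x '' s :=
    image_congr fun j hj => Function.update_of_ne (ne_of_mem_of_not_mem hj hs) _ _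
  intro i p hp
  rcases eq_or_ne i k with rfl | hik
  · rw [image_update (by simp)] at hp
    rw [Function.update_self]
    linarith [hx i p hp, dist_triangle_left (x i) p y]
  · rw [image_compl_singleton_eq_insert _ hik, Function.update_self, image_update (by simp)] at hp
    rw [Function.update_of_ne hik]
    refine sub_le_dist_of_mem_affineSpan_insert ?_ ?_ hy hp
    · rw [← image_compl_singleton_eq_insert x hik]
      exact hx i
    · rw [pair_comm, ← image_compl_singleton_eq_insert x hik.symm]
      exact hx k

end NormedAddTorsor

theorem isHSimplex_iff_heightsAtLeast {N m : ℕ} (hm : 1 ≤ m) {σ : ℝ}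
    {x : Fin (m + 1) → EuclideanSpace ℝ (Fin N)} :
    IsHSimplex N σ x ↔ HeightsAtLeast ℝ σ x := by
  have : Nontrivial (Fin (m + 1)) := Fin.nontrivial_iff_two_le.2 (Nat.succ_le_succ hm)
  refine forall_congr' fun i => le_infDist ?_
  exact (affineSpan_nonempty ℝ).2 ((nonempty_compl_of_nontrivial i).image x)

/-- **Lemma.** Let `0 < h < H`, `1 ≤ m ≤ N+1`.  If `Δ(x₀,…,x_m)` is an `(m,H)`-simplex
and `|y₀ − x₀| ≤ h`, then `Δ(y₀,x₁,…,x_m)` is an `(m,H−h)`-simplex. -/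
theorem isHSimplex_update {N m : ℕ} (hm1 : 1 ≤ m) (hmN : m ≤ N + 1)
    (h H : ℝ) (hh : 0 < h) (hH : h < H)
    (x : Fin (m + 1) → EuclideanSpace ℝ (Fin N)) (y₀ : EuclideanSpace ℝ (Fin N))
    (hx : IsHSimplex N H x) (hy : dist y₀ (x 0) ≤ h) :
    IsHSimplex N (H - h) (Function.update x 0 y₀) := by
  rw [isHSimplex_iff_heightsAtLeast hm1] at hx ⊢
  exact isHSimplex_update_general hx hy

end
end

section
/- Let 1 ≤ m ≤ N−1 be integers, let B be a closed ball in ℝ^N, and let F ⊂ B be an H^m-measurable set with H^m(F) = ∞. Then there exist a constant σ with 0 < σ ≤ (diam B)/2 and an (m+1, (m+3)σ)-simplex T = Δ(x_0,…,x_{m+1}) with vertices x_0,…,x_{m+1} ∈ B such that H^m(B(x_0,σ) ∩ F) = ∞ and H^m(B(x_i,σ) ∩ F) > 0 for every i ∈ {1,…,m+1}. -/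
open MeasureTheory Metric Set
open scoped NNReal ENNReal

noncomputable section

/-!
The restriction `ν` of `μH[d]` to `F` is an infinite measure carried by a compact set, so it is
infinite on every neighbourhood of some point `x 0`. An affine subspace of dimension at most
`m ≤ d` meets the compact set in a set of finite `μH[d]`-measure, so it cannot contain the support
of `ν`. Hence further points of the support can be picked greedily, each outside the affine span of
the previous ones, until there are `m + 2` affinely independent points. The heights of the simplex
they span are positive, and every sufficiently small `σ` works.
-/

open Filter Module Topology

section AffineIndependence

variable {k V P : Type*} [DivisionRing k] [AddCommGroup V] [Module k V] [AddTorsor V P]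

theorem affineIndependent_finSnoc {n : ℕ} {x : Fin n → P} {p : P} (hx : AffineIndependent k x)
    (hp : p ∉ affineSpan k (range x)) :
    AffineIndependent k (Fin.snoc x p : Fin (n + 1) → P) := by
  refine AffineIndependent.affineIndependent_of_notMem_span (i := Fin.last n) ?_ ?_
  · rw [← affineIndependent_equiv (finSuccAboveEquiv (Fin.last n))]
    simpa [Function.comp_def, finSuccAboveEquiv_apply] using hx
  · have himage : (Fin.snoc x p : Fin (n + 1) → P) '' {i | i ≠ Fin.last n} = range x := by
      rw [← compl_singleton_eq, ← Fin.range_succAbove, ← range_comp, Fin.succAbove_last]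
      simp [Function.comp_def]
    simpa [himage] using hp

theorem exists_affineIndependent_of_forall_not_subset {S : Set P} {p : P} (hp : p ∈ S) (n : ℕ)
    (hS : ∀ W : AffineSubspace k P, FiniteDimensional k W.direction →
      finrank k W.direction < n → ¬ S ⊆ W) :
    ∃ x : Fin (n + 1) → P, x 0 = p ∧ (∀ i, x i ∈ S) ∧ AffineIndependent k x := by
  induction n with
  | zero =>
    have : Subsingleton (Fin (0 + 1)) := Fin.subsingleton_one
    exact ⟨fun _ => p, rfl, fun _ => hp, affineIndependent_of_subsingleton k _⟩
  | succ n ih =>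
    obtain ⟨x, hx0, hxS, hx⟩ := ih fun W hW hWn => hS W hW (hWn.trans n.lt_succ_self)
    have hspan : finrank k (affineSpan k (range x)).direction = n := by
      rw [direction_affineSpan, hx.finrank_vectorSpan (Fintype.card_fin _)]
    obtain ⟨q, hqS, hq⟩ := not_subset.1 <| hS (affineSpan k (range x))
      (finiteDimensional_direction_affineSpan_of_finite k (finite_range x)) (by lia)
    refine ⟨Fin.snoc x q, ?_, ?_, affineIndependent_finSnoc hx hq⟩
    · rw [← Fin.castSucc_zero, Fin.snoc_castSucc, hx0]
    · exact Fin.lastCases (by simpa using hqS) (by simpa using hxS)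

end AffineIndependence

theorem exists_forall_mem_nhds_measure_eq_top {X : Type*} [TopologicalSpace X]
    [MeasurableSpace X] {μ : Measure X} {K : Set X} (hK : IsCompact K) (hμ : μ K = ⊤) :
    ∃ x ∈ K, ∀ U ∈ 𝓝 x, μ U = ⊤ := by
  by_contra! h
  refine (hK.measure_lt_top_of_nhdsWithin fun x hx => ?_).ne hμ
  obtain ⟨U, hU, hUtop⟩ := h x hx
  exact ⟨U, mem_nhdsWithin_of_mem_nhds hU, hUtop.lt_top⟩

theorem support_mem_ae_of_isCompact_mem_ae {X : Type*} [PseudoEMetricSpace X] [MeasurableSpace X]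
    {μ : Measure X} {K : Set X} (hK : IsCompact K) (hμK : K ∈ ae μ) : μ.support ∈ ae μ := by
  obtain ⟨C, hCclosed, hCsub, hCunion, -⟩ :=
    (Measure.isOpen_compl_support (μ := μ)).exists_iUnion_isClosed
  rw [mem_ae_iff, ← hCunion, measure_iUnion_null_iff]
  intro n
  rw [← measure_inter_conull (mem_ae_iff.1 hμK)]
  exact Measure.measure_eq_zero_of_isCompact_subset_compl_support (hK.inter_left (hCclosed n))
    (inter_subset_left.trans (hCsub n))

section NormedAffineSpace

variable {V P : Type*} [NormedAddCommGroup V] [NormedSpace ℝ V] [MetricSpace P]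
  [NormedAddTorsor V P]

/-- The distance from the vertex `x i` of the simplex with vertices `x` to the affine span of the
other vertices. If there are no other vertices it is `0`, the distance to the empty set. -/
def vertexHeight {ι : Type*} (x : ι → P) (i : ι) : ℝ :=
  infDist (x i) (affineSpan ℝ (x '' {i}ᶜ) : Set P)

theorem vertexHeight_pos {ι : Type*} [Finite ι] [Nontrivial ι] {x : ι → P}
    (hx : AffineIndependent ℝ x) (i : ι) : 0 < vertexHeight x i := by
  have : FiniteDimensional ℝ (affineSpan ℝ (x '' {i}ᶜ)).direction :=
    finiteDimensional_direction_affineSpan_of_finite ℝ (toFinite _)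
  have hne : (affineSpan ℝ (x '' {i}ᶜ) : Set P).Nonempty :=
    ((nonempty_compl_of_nontrivial i).image x).affineSpan ℝ
  have hclosed := AffineSubspace.closed_of_finiteDimensional (affineSpan ℝ (x '' {i}ᶜ))
  rw [vertexHeight, ← hclosed.notMem_iff_infDist_pos hne]
  simpa [compl_eq_univ_sdiff] using hx.notMem_affineSpan_sdiff i univ

theorem eventually_forall_mul_le_vertexHeight {ι : Type*} [Finite ι] [Nontrivial ι] {x : ι → P}
    (hx : AffineIndependent ℝ x) (L : ℝ) :
    ∀ᶠ σ in 𝓝 (0 : ℝ), ∀ i, L * σ ≤ vertexHeight x i := by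
  have hlim : Tendsto (L * ·) (𝓝 0) (𝓝 0) := by
    simpa using (continuous_const_mul L).tendsto 0
  exact eventually_all.2 fun i => (hlim.eventually_lt_const (vertexHeight_pos hx i)).mono
    fun _ => le_of_lt

variable [MeasurableSpace P]

theorem hausdorffMeasure_inter_lt_top_of_finrank_direction_le [BorelSpace P]
    (W : AffineSubspace ℝ P) [FiniteDimensional ℝ W.direction] {d : ℝ}
    (hd : finrank ℝ W.direction ≤ d) {s : Set P} (hs : Bornology.IsBounded s) :
    μH[d] ((W : Set P) ∩ s) < ⊤ := by
  obtain hW | ⟨p, hp⟩ := (W : Set P).eq_empty_or_nonempty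
  · simp [hW]
  borelize V
  let f : W.direction → P := fun v => (v : V) +ᵥ p
  have hf : Isometry f :=
    (IsometryEquiv.vaddConst p).isometry.comp W.direction.subtypeₗᵢ.isometry
  have hrange : range f = W := by
    ext q
    exact ⟨fun ⟨v, hv⟩ => hv ▸ AffineSubspace.vadd_mem_of_mem_direction v.2 hp,
      fun hq => ⟨⟨q -ᵥ p, AffineSubspace.vsub_mem_direction hq hp⟩, vsub_vadd q p⟩⟩
  have := isAddHaarMeasure_hausdorffMeasure (E := W.direction)
  calc μH[d] ((W : Set P) ∩ s)
      = μH[d] (f ⁻¹' s) := by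
        rw [hf.hausdorffMeasure_preimage (.inl ((Nat.cast_nonneg _).trans hd)), hrange, inter_comm]
    _ ≤ μH[finrank ℝ W.direction] (f ⁻¹' s) := Measure.hausdorffMeasure_mono hd _
    _ < ⊤ := (hf.antilipschitz.isBounded_preimage hs).measure_lt_top

theorem exists_affineIndependent_mem_support {μ : Measure P} {K : Set P} (hK : IsCompact K)
    (hμK : K ∈ ae μ) (hμ : μ univ = ⊤) (n : ℕ)
    (hfin : ∀ W : AffineSubspace ℝ P, FiniteDimensional ℝ W.direction →
      finrank ℝ W.direction < n → μ W < ⊤) :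
    ∃ x : Fin (n + 1) → P, AffineIndependent ℝ x ∧ (∀ i, x i ∈ μ.support) ∧
      ∀ U ∈ 𝓝 (x 0), μ U = ⊤ := by
  have hconull {s : Set P} (hs : s ∈ ae μ) : μ s = ⊤ :=
    (measure_congr (eventuallyEq_univ.2 hs)).trans hμ
  obtain ⟨p, -, hp⟩ := exists_forall_mem_nhds_measure_eq_top hK (hconull hμK)
  have hpsupport : p ∈ μ.support :=
    (Measure.mem_support_iff_forall p).2 fun U hU => by simp [hp U hU]
  have hsupport : μ μ.support = ⊤ := hconull (support_mem_ae_of_isCompact_mem_ae hK hμK)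
  obtain ⟨x, hx0, hxsupport, hx⟩ := exists_affineIndependent_of_forall_not_subset hpsupport n
    fun W hW hWn hsub => (hfin W hW hWn).not_ge (hsupport ▸ measure_mono hsub)
  exact ⟨x, hx, hxsupport, hx0 ▸ hp⟩

theorem exists_affineIndependent_hausdorffMeasure_closedBall_inter [BorelSpace P] {d : ℝ} {m : ℕ}
    (hmd : m ≤ d) {K F : Set P} (hK : IsCompact K) (hFK : F ⊆ K) (hF : μH[d] F = ⊤) :
    ∃ x : Fin (m + 2) → P, AffineIndependent ℝ x ∧ (∀ i, x i ∈ K) ∧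
      ∀ σ > 0, μH[d] (closedBall (x 0) σ ∩ F) = ⊤ ∧
        ∀ i, 0 < μH[d] (closedBall (x i) σ ∩ F) := by
  set ν := (μH[d] : Measure P).restrict F
  have hball (p : P) (σ : ℝ) : μH[d] (closedBall p σ ∩ F) = ν (closedBall p σ) :=
    (Measure.restrict_apply measurableSet_closedBall).symm
  have hνK : K ∈ ae ν := by
    rw [mem_ae_iff, Measure.restrict_apply hK.measurableSet.compl,
      (disjoint_compl_left_iff_subset.2 hFK).inter_eq, measure_empty]
  have hfin (W : AffineSubspace ℝ P) (_ : FiniteDimensional ℝ W.direction)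
      (hW : finrank ℝ W.direction < m + 1) : ν W < ⊤ := by
    have hWd : (finrank ℝ W.direction : ℝ) ≤ d :=
      (Nat.cast_le.2 (Nat.lt_succ_iff.1 hW)).trans hmd
    calc ν W = μH[d] ((W : Set P) ∩ F) :=
          Measure.restrict_apply W.closed_of_finiteDimensional.measurableSet
      _ < ⊤ := hausdorffMeasure_inter_lt_top_of_finrank_direction_le W hWd
          (hK.isBounded.subset hFK)
  obtain ⟨x, hx, hxsupport, hx0⟩ := exists_affineIndependent_mem_support hK hνK
    (by rwa [Measure.restrict_apply_univ]) (m + 1) hfin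
  simp only [hball]
  exact ⟨x, hx,
    fun i => Measure.support_subset_of_isClosed hK.isClosed hνK (hxsupport i),
    fun σ hσ => ⟨hx0 _ (closedBall_mem_nhds _ hσ), fun i =>
      (Measure.mem_support_iff_forall _).1 (hxsupport i) _ (closedBall_mem_nhds _ hσ)⟩⟩

theorem exists_fat_simplex_of_infinite_measure_general [BorelSpace P] {d : ℝ} {m : ℕ}
    (hmd : m ≤ d) {K F : Set P} (hK : IsCompact K) (hFK : F ⊆ K) (hF : μH[d] F = ⊤) (L : ℝ) :
    ∃ σ : ℝ, 0 < σ ∧ σ ≤ diam K / 2 ∧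
      ∃ x : Fin (m + 2) → P,
        (∀ i, L * σ ≤ vertexHeight x i) ∧
        (∀ i, x i ∈ K) ∧
        μH[d] (closedBall (x 0) σ ∩ F) = ⊤ ∧
        ∀ i, 0 < μH[d] (closedBall (x i) σ ∩ F) := by
  obtain ⟨x, hx, hxK, hxball⟩ :=
    exists_affineIndependent_hausdorffMeasure_closedBall_inter hmd hK hFK hF
  have hdiam : 0 < diam K := (dist_pos.2 (hx.injective.ne zero_ne_one)).trans_le
    (dist_le_diam_of_mem hK.isBounded (hxK 0) (hxK 1))
  have hsmall : ∀ᶠ σ in 𝓝[>] (0 : ℝ), σ ≤ diam K / 2 ∧ ∀ i, L * σ ≤ vertexHeight x i :=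
    ((eventually_le_nhds (half_pos hdiam)).and
      (eventually_forall_mul_le_vertexHeight hx L)).filter_mono nhdsWithin_le_nhds
  obtain ⟨σ, ⟨hσdiam, hσheight⟩, hσ⟩ := (hsmall.and self_mem_nhdsWithin).exists
  exact ⟨σ, hσ, hσdiam, x, hσheight, hxK, hxball σ hσ⟩

end NormedAffineSpace

/-- **Lemma.** Let `1 ≤ m ≤ N−1`, let `B` be a closed ball in `ℝ^N` and `F ⊆ B` an
`H^m`-measurable set with `H^m(F) = ∞`.  Then there exist `0 < σ ≤ diam B / 2` and an
`(m+1,(m+3)σ)`-simplex `Δ(x₀,…,x_{m+1})` with vertices in `B` such that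
`H^m(B(x₀,σ) ∩ F) = ∞` and `H^m(B(x_i,σ) ∩ F) > 0` for all `i ∈ {1,…,m+1}`. -/
theorem exists_fat_simplex_of_infinite_measure {N m : ℕ} (hm1 : 1 ≤ m) (hmN : m < N)
    (c : EuclideanSpace ℝ (Fin N)) (r : ℝ)
    (F : Set (EuclideanSpace ℝ (Fin N))) (hFmeas : MeasurableSet F)
    (hFB : F ⊆ Metric.closedBall c r)
    (hinf : μH[(m : ℝ)] F = ⊤) :
    ∃ σ : ℝ, 0 < σ ∧ σ ≤ Metric.diam (Metric.closedBall c r) / 2 ∧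
      ∃ x : Fin (m + 2) → EuclideanSpace ℝ (Fin N),
        IsHSimplex N (((m : ℝ) + 3) * σ) x ∧
        (∀ i, x i ∈ Metric.closedBall c r) ∧
        μH[(m : ℝ)] (Metric.closedBall (x 0) σ ∩ F) = ⊤ ∧
        ∀ i : Fin (m + 2), i ≠ 0 →
          0 < μH[(m : ℝ)] (Metric.closedBall (x i) σ ∩ F) := by
  obtain ⟨σ, hσ, hσdiam, x, hheight, hxB, hx0, hxpos⟩ :=
    exists_fat_simplex_of_infinite_measure_general le_rfl (isCompact_closedBall c r) hFB hinf
      (m + 3)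
  exact ⟨σ, hσ, hσdiam, x, hheight, hxB, hx0, fun i _ => hxpos i⟩

end
end

section
/- Let P_0 be an n-dimensional linear subspace of ℝ^N (1 ≤ n < N), let U ⊂ P_0, let q ∈ U and t > 0 with B(q,t) ∩ P_0 ⊂ U, and let g : U → P_0^⊥ be a Lipschitz function whose Lipschitz constant L satisfies 60n·(10^n + 1)·(8n·ω_{n−1}/ω_n)^{n+1} ≤ 1/L. Then γ_g(q,t) ≤ 3·γ̃_g(q,t), where γ̃_g(q,t) := inf over all n-dimensional affine subspaces P of ℝ^N of (1/t^n) ∫_{B(q,t)∩P_0} (dist(u + g(u), P)/t) dH^n(u). Here ω_m is the m-dimensional volume of the m-dimensional unit ball. -/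
open MeasureTheory Metric Set
open scoped NNReal ENNReal

noncomputable section

/-- `ω_m`, the `m`-dimensional volume of the `m`-dimensional unit ball. -/
def unitBallVol (m : ℕ) : ℝ :=
  (MeasureTheory.volume (Metric.closedBall (0 : EuclideanSpace ℝ (Fin m)) 1)).toReal

/-- The `γ`-function `γ_g(q,t)`: best affine `L¹`-approximation of `g` on `B(q,t) ∩ P₀`,
the infimum being taken over all affine maps with values in `P₀ᗮ`. -/
def gammaFn (N n : ℕ) (P₀ : Submodule ℝ (EuclideanSpace ℝ (Fin N)))
    (g : EuclideanSpace ℝ (Fin N) → EuclideanSpace ℝ (Fin N))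
    (q : EuclideanSpace ℝ (Fin N)) (t : ℝ) : ℝ≥0∞ :=
  ⨅ (a : EuclideanSpace ℝ (Fin N) →ᵃ[ℝ] EuclideanSpace ℝ (Fin N)) (_ : ∀ v, a v ∈ P₀ᗮ),
    (ENNReal.ofReal (t ^ n))⁻¹ *
      ∫⁻ u in Metric.closedBall q t ∩ (P₀ : Set (EuclideanSpace ℝ (Fin N))),
        ENNReal.ofReal (‖g u - a u‖ / t) ∂μH[(n : ℝ)]

/-- `P` is (the carrier of) an `n`-dimensional affine subspace of `ℝ^N`. -/
def IsAffDim (N n : ℕ) (P : AffineSubspace ℝ (EuclideanSpace ℝ (Fin N))) : Prop :=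
  (P : Set (EuclideanSpace ℝ (Fin N))).Nonempty ∧ Module.finrank ℝ P.direction = n

/-- The `γ̃`-function: best `L¹`-approximation of the graph point `u + g(u)` on
`B(q,t) ∩ P₀` by `n`-dimensional affine subspaces of `ℝ^N`. -/
def gammaTilde (N n : ℕ) (P₀ : Submodule ℝ (EuclideanSpace ℝ (Fin N)))
    (g : EuclideanSpace ℝ (Fin N) → EuclideanSpace ℝ (Fin N))
    (q : EuclideanSpace ℝ (Fin N)) (t : ℝ) : ℝ≥0∞ :=
  ⨅ (P : AffineSubspace ℝ (EuclideanSpace ℝ (Fin N))) (_ : IsAffDim N n P),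
    (ENNReal.ofReal (t ^ n))⁻¹ *
      ∫⁻ u in Metric.closedBall q t ∩ (P₀ : Set (EuclideanSpace ℝ (Fin N))),
        ENNReal.ofReal (Metric.infDist (u + g u) (P : Set (EuclideanSpace ℝ (Fin N))) / t)
        ∂μH[(n : ℝ)]

/-! Fix a competing plane `P` with direction `V`. If `‖e‖ ≤ C ‖π_V e‖` for every `e ∈ P₀`, then `P`
is the graph of an affine map `a : P₀ → P₀ᗮ`, and by duality `‖h‖ ≤ C ‖π_{Vᗮ} h‖` for `h ∈ P₀ᗮ`, so
that `|g u - a u| ≤ C dist(u + g u, P)` pointwise. Otherwise some unit vector `e ∈ P₀` is almost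
orthogonal to `V`, and the constant `g q` is a good enough approximation: the reflection `ρ` in the
hyperplane through `q` orthogonal to `e` preserves `B(q,t) ∩ P₀` and displaces `u` by
`2⟨e, u - q⟩ e`, so the points of the graph over `u` and `ρ u` cannot both be near `P`, and
`∫ dist(u + g u, P)` controls `∫ |⟨e, u - q⟩|`. By symmetry this first moment is the same in all
directions of `P₀`, hence at least `(1/n) ∫ |u - q|`, which dominates `∫ |g u - g q|` up to the
Lipschitz constant. -/

section UnitBall

lemma unitBallVol_pos (m : ℕ) : 0 < unitBallVol m :=
  ENNReal.toReal_pos (measure_closedBall_pos volume _ one_pos).ne' measure_closedBall_lt_top.ne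

-- Slicing off the first coordinate puts the unit ball of `ℝ^(m+1)` inside `[-1, 1] × B^m`.
lemma unitBallVol_succ_le (m : ℕ) : unitBallVol (m + 1) ≤ 2 * unitBallVol m := by
  let split : EuclideanSpace ℝ (Fin (m + 1)) → ℝ × EuclideanSpace ℝ (Fin m) :=
    fun x => (x 0, WithLp.toLp 2 fun i => x i.succ)
  have hsplit : MeasurePreserving split :=
    (((MeasurePreserving.id volume).prod (PiLp.volume_preserving_toLp (Fin m))).comp
      (volume_preserving_piFinSuccAbove (fun _ => ℝ) 0)).comp
      (PiLp.volume_preserving_ofLp (Fin (m + 1)))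
  have hsub : closedBall (0 : EuclideanSpace ℝ (Fin (m + 1))) 1 ⊆
      split ⁻¹' (Icc (-1) 1 ×ˢ closedBall 0 1) := by
    intro x hx
    rw [mem_closedBall_zero_iff, ← sq_le_one_iff₀ (norm_nonneg x), EuclideanSpace.real_norm_sq_eq,
      Fin.sum_univ_succ] at hx
    refine ⟨abs_le.1 ((sq_le_one_iff_abs_le_one (x 0)).1 ?_), ?_⟩
    · exact (le_add_of_nonneg_right (Finset.sum_nonneg fun i _ => sq_nonneg _)).trans hx
    · rw [mem_closedBall_zero_iff, ← sq_le_one_iff₀ (norm_nonneg _),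
        EuclideanSpace.real_norm_sq_eq]
      exact (le_add_of_nonneg_left (sq_nonneg _)).trans hx
  have hvol : volume (closedBall (0 : EuclideanSpace ℝ (Fin (m + 1))) 1) ≤
      2 * volume (closedBall (0 : EuclideanSpace ℝ (Fin m)) 1) := by
    calc volume (closedBall (0 : EuclideanSpace ℝ (Fin (m + 1))) 1)
        ≤ volume (split ⁻¹' (Icc (-1) 1 ×ˢ closedBall 0 1)) := measure_mono hsub
      _ = volume (Icc (-1 : ℝ) 1 ×ˢ closedBall (0 : EuclideanSpace ℝ (Fin m)) 1) :=
        hsplit.measure_preimage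
          (measurableSet_Icc.prod isClosed_closedBall.measurableSet).nullMeasurableSet
      _ = 2 * volume (closedBall (0 : EuclideanSpace ℝ (Fin m)) 1) := by
        rw [Measure.volume_eq_prod, Measure.prod_prod, Real.volume_Icc]
        norm_num
  refine (ENNReal.toReal_mono (ENNReal.mul_ne_top ENNReal.ofNat_ne_top
    measure_closedBall_lt_top.ne) hvol).trans_eq ?_
  rw [ENNReal.toReal_mul, ENNReal.toReal_ofNat, unitBallVol]

lemma one_le_eight_mul_unitBallVol_ratio {n : ℕ} (hn : 1 ≤ n) :
    1 ≤ 8 * n * unitBallVol (n - 1) / unitBallVol n := by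
  obtain ⟨m, rfl⟩ := Nat.exists_eq_add_of_le' hn
  rw [Nat.add_sub_cancel, one_le_div (unitBallVol_pos _)]
  have hm : (2 : ℝ) ≤ 8 * ((m + 1 : ℕ) : ℝ) := by push_cast; linarith [m.cast_nonneg (α := ℝ)]
  exact (unitBallVol_succ_le m).trans (mul_le_mul_of_nonneg_right hm (unitBallVol_pos m).le)

lemma mul_add_three_add_one_le_of_lipschitz_bound {n : ℕ} (hn : 1 ≤ n) {L : ℝ≥0} (hL : 0 < L)
    (hLbound : 60 * n * ((10 : ℝ) ^ n + 1) *
      (8 * n * unitBallVol (n - 1) / unitBallVol n) ^ (n + 1) ≤ 1 / L) :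
    L * (n + 3) + 1 ≤ 3 := by
  have hfactor : 1 ≤ ((10 : ℝ) ^ n + 1) *
      (8 * n * unitBallVol (n - 1) / unitBallVol n) ^ (n + 1) :=
    one_le_mul_of_one_le_of_one_le (le_add_of_nonneg_left (by positivity))
      (one_le_pow₀ (one_le_eight_mul_unitBallVol_ratio hn))
  have hnL : 60 * n * (L : ℝ) ≤ 1 := by
    rw [← le_div_iff₀ (NNReal.coe_pos.2 hL)]
    rw [mul_assoc] at hLbound
    exact (le_mul_of_one_le_right (by positivity) hfactor).trans hLbound
  have hLn : (L : ℝ) ≤ n * L := le_mul_of_one_le_left L.coe_nonneg (Nat.one_le_cast.2 hn)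
  have hreal : (L : ℝ) * (n + 3) + 1 ≤ 3 := by linarith
  exact_mod_cast hreal

end UnitBall

section Projection

variable {E : Type*} [NormedAddCommGroup E] [InnerProductSpace ℝ E] {V W : Submodule ℝ E} {C : ℝ}

lemma exists_mem_starProjection_eq_of_norm_le [FiniteDimensional ℝ V] [FiniteDimensional ℝ W]
    (hdim : Module.finrank ℝ W = Module.finrank ℝ V)
    (hW : ∀ e ∈ W, ‖e‖ ≤ C * ‖V.starProjection e‖) {v : E} (hv : v ∈ V) :
    ∃ e ∈ W, V.starProjection e = v := by
  let T : W →ₗ[ℝ] V := V.orthogonalProjectionOnto.toLinearMap ∘ₗ W.subtype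
  have hT : ∀ e : W, (T e : E) = V.starProjection e := fun e => rfl
  have hinj : Function.Injective T := (injective_iff_map_eq_zero T).2 fun e he => by
    simpa [← hT, he] using hW e e.2
  obtain ⟨e, he⟩ :=
    (LinearMap.injective_iff_surjective_of_finrank_eq_finrank hdim).1 hinj ⟨v, hv⟩
  exact ⟨e, e.2, by rw [← hT, he]⟩

lemma norm_starProjection_sq_le_of_inner_eq_zero [V.HasOrthogonalProjection] {e h : E}
    (heh : inner ℝ e h = 0) (hV : V.starProjection e = V.starProjection h) :
    ‖V.starProjection h‖ ^ 2 ≤ ‖Vᗮ.starProjection e‖ * ‖Vᗮ.starProjection h‖ := by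
  have hVh : inner ℝ (V.starProjection h) h = ‖V.starProjection h‖ ^ 2 :=
    V.re_inner_starProjection_eq_normSq h
  have hsum : ‖V.starProjection h‖ ^ 2 +
      inner ℝ (Vᗮ.starProjection e) (Vᗮ.starProjection h) = 0 := by
    calc ‖V.starProjection h‖ ^ 2 + inner ℝ (Vᗮ.starProjection e) (Vᗮ.starProjection h)
        = inner ℝ (V.starProjection e) h + inner ℝ (Vᗮ.starProjection e) h := by
          rw [hV, hVh, ← Vᗮ.inner_starProjection_left_eq_right,
            Submodule.starProjection_eq_self_iff.2 (Vᗮ.starProjection_apply_mem e)]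
      _ = 0 := by rw [← inner_add_left, V.starProjection_add_starProjection_orthogonal, heh]
  linarith [(abs_le.1 (abs_real_inner_le_norm (Vᗮ.starProjection e) (Vᗮ.starProjection h))).1]

-- Compare `h` with the vector `e ∈ W` whose projection to `V` is the same.
lemma norm_le_mul_norm_starProjection_orthogonal [FiniteDimensional ℝ V] [FiniteDimensional ℝ W]
    (hdim : Module.finrank ℝ W = Module.finrank ℝ V) (hC : 1 ≤ C)
    (hW : ∀ e ∈ W, ‖e‖ ≤ C * ‖V.starProjection e‖) {h : E} (hh : h ∈ Wᗮ) :
    ‖h‖ ≤ C * ‖Vᗮ.starProjection h‖ := by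
  obtain ⟨e, heW, hev⟩ :=
    exists_mem_starProjection_eq_of_norm_le hdim hW (V.starProjection_apply_mem h)
  have hv := norm_starProjection_sq_le_of_inner_eq_zero (hh e heW) hev
  have hnorm_h := V.norm_sq_eq_add_norm_sq_starProjection h
  have hnorm_e := V.norm_sq_eq_add_norm_sq_starProjection e
  have he := hW e heW
  rw [hev] at hnorm_e he
  set v := V.starProjection h
  set h' := Vᗮ.starProjection h
  set e' := Vᗮ.starProjection e
  have hC2 : 0 ≤ C ^ 2 - 1 := sub_nonneg.2 (one_le_pow₀ hC)
  have he' : ‖e'‖ ^ 2 ≤ (C ^ 2 - 1) * ‖v‖ ^ 2 := by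
    have := pow_le_pow_left₀ (norm_nonneg e) he 2
    rw [mul_pow] at this
    linarith
  have hvh : ‖v‖ ^ 2 ≤ (C ^ 2 - 1) * ‖h'‖ ^ 2 := by
    rcases (sq_nonneg ‖v‖).eq_or_lt with hv0 | hv0
    · rw [← hv0]
      positivity
    · refine le_of_mul_le_mul_left ?_ hv0
      calc ‖v‖ ^ 2 * ‖v‖ ^ 2 ≤ (‖e'‖ * ‖h'‖) * (‖e'‖ * ‖h'‖) := by gcongr
        _ = ‖e'‖ ^ 2 * ‖h'‖ ^ 2 := by ring
        _ ≤ (C ^ 2 - 1) * ‖v‖ ^ 2 * ‖h'‖ ^ 2 := by gcongr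
        _ = ‖v‖ ^ 2 * ((C ^ 2 - 1) * ‖h'‖ ^ 2) := by ring
  refine le_of_sq_le_sq ?_ (by positivity)
  rw [mul_pow]
  linarith

lemma sub_mul_norm_le_mul_norm_starProjection_orthogonal [V.HasOrthogonalProjection] {K : ℝ}
    (hC : 0 ≤ C) {x z : E} (hx : C * ‖V.starProjection x‖ ≤ ‖x‖) (hz : ‖z‖ ≤ K * ‖x‖) :
    (C - 1 - K * C) * ‖x‖ ≤ C * ‖Vᗮ.starProjection (x + z)‖ := by
  have hsplit : ‖x‖ ≤ ‖V.starProjection x‖ + ‖Vᗮ.starProjection x‖ := by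
    conv_lhs => rw [← V.starProjection_add_starProjection_orthogonal x]
    exact norm_add_le _ _
  have hxz : ‖Vᗮ.starProjection x‖ ≤ ‖Vᗮ.starProjection (x + z)‖ + K * ‖x‖ := by
    calc ‖Vᗮ.starProjection x‖ = ‖Vᗮ.starProjection (x + z) - Vᗮ.starProjection z‖ := by
          rw [← map_sub, add_sub_cancel_right]
      _ ≤ ‖Vᗮ.starProjection (x + z)‖ + ‖Vᗮ.starProjection z‖ := norm_sub_le _ _
      _ ≤ ‖Vᗮ.starProjection (x + z)‖ + K * ‖x‖ := by
          gcongr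
          exact (Submodule.norm_starProjection_apply_le _ _).trans hz
  linarith [mul_le_mul_of_nonneg_left (hsplit.trans (add_le_add_right hxz _)) hC]

variable {P : AffineSubspace ℝ E}

lemma enorm_starProjection_orthogonal_sub_le_infEDist [P.direction.HasOrthogonalProjection]
    {p : E} (hp : p ∈ P) (x : E) :
    ‖P.directionᗮ.starProjection (x - p)‖ₑ ≤ infEDist x (P : Set E) := by
  refine le_infEDist.2 fun y hy => ?_
  have hyp : P.directionᗮ.starProjection (y - p) = 0 :=
    Submodule.starProjection_orthogonal_apply_eq_zero (AffineSubspace.vsub_mem_direction hy hp)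
  calc ‖P.directionᗮ.starProjection (x - p)‖ₑ
      = ‖P.directionᗮ.starProjection (x - y)‖ₑ := by
        rw [← sub_add_sub_cancel x y p, map_add, hyp, add_zero]
    _ ≤ ‖x - y‖ₑ := enorm_le_iff_norm_le.2 (Submodule.norm_starProjection_apply_le _ _)
    _ = edist x y := (edist_eq_enorm_sub x y).symm

lemma enorm_starProjection_orthogonal_sub_le_infEDist_add
    (P : AffineSubspace ℝ E) [P.direction.HasOrthogonalProjection] (x y : E) :
    ‖P.directionᗮ.starProjection (x - y)‖ₑ ≤
      infEDist x (P : Set E) + infEDist y (P : Set E) := by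
  rcases (P : Set E).eq_empty_or_nonempty with hP | ⟨p, hp⟩
  · simp only [hP, infEDist_empty, add_top, le_top]
  rw [← sub_sub_sub_cancel_right x y p, map_sub]
  exact enorm_sub_le.trans (add_le_add
    (enorm_starProjection_orthogonal_sub_le_infEDist hp x)
    (enorm_starProjection_orthogonal_sub_le_infEDist hp y))

lemma exists_affineMap_enorm_sub_le_mul_infEDist [FiniteDimensional ℝ E] {C : ℝ≥0}
    (hP : (P : Set E).Nonempty)
    (hdim : Module.finrank ℝ W = Module.finrank ℝ P.direction) (hC : 1 ≤ C)
    (hW : ∀ e ∈ W, ‖e‖ ≤ C * ‖P.direction.starProjection e‖) :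
    ∃ a : E →ᵃ[ℝ] E, (∀ v, a v ∈ Wᗮ) ∧
      ∀ u, ∀ y ∈ Wᗮ, ‖y - a u‖ₑ ≤ C * infEDist (u + y) (P : Set E) := by
  obtain ⟨p, hp⟩ := hP
  have hbound {h : E} (hh : h ∈ Wᗮ) : ‖h‖ ≤ C * ‖P.directionᗮ.starProjection h‖ :=
    norm_le_mul_norm_starProjection_orthogonal hdim hC hW hh
  have hdisj : Disjoint Wᗮ P.direction := by
    refine Submodule.disjoint_def.2 fun x hxW hxP => ?_
    simpa [Submodule.starProjection_orthogonal_apply_eq_zero hxP] using hbound hxW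
  have hcompl : IsCompl Wᗮ P.direction := by
    refine (Submodule.isCompl_iff_disjoint _ _ ?_).2 hdisj
    rw [← hdim, add_comm, W.finrank_add_finrank_orthogonal]
  let π := Wᗮ.projection P.direction hcompl
  have hπ : ∀ x, π x ∈ Wᗮ := Submodule.projection_apply_mem hcompl
  let a : E →ᵃ[ℝ] E := π.toAffineMap.comp (AffineMap.const ℝ E p - AffineMap.id ℝ E)
  refine ⟨a, fun v => hπ _, fun u y hy => ?_⟩
  have ha : a u = π (p - u) := rfl
  have hvert : u + a u - p ∈ P.direction := by
    rw [← Submodule.projection_apply_eq_zero_iff hcompl, add_sub_right_comm, map_add, ha,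
      Submodule.projection_apply_of_mem_left hcompl (hπ _), ← map_add, sub_add_sub_cancel,
      sub_self, map_zero]
  have hproj : P.directionᗮ.starProjection (u + y - p) =
      P.directionᗮ.starProjection (y - a u) := by
    rw [show u + y - p = (y - a u) + (u + a u - p) by abel, map_add,
      Submodule.starProjection_orthogonal_apply_eq_zero hvert, add_zero]
  calc ‖y - a u‖ₑ ≤ C * ‖P.directionᗮ.starProjection (y - a u)‖ₑ := by
        simp only [enorm_eq_nnnorm]
        exact_mod_cast hbound (Wᗮ.sub_mem hy (hπ _))
    _ ≤ C * infEDist (u + y) (P : Set E) := by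
        rw [← hproj]
        gcongr
        exact enorm_starProjection_orthogonal_sub_le_infEDist hp _

end Projection

section Reflection

variable {E : Type*} [NormedAddCommGroup E] [InnerProductSpace ℝ E]

/-- The reflection in the affine hyperplane through `q` orthogonal to `w`; it is the identity
if `w = 0`. -/
def hyperplaneReflection (q w : E) : E ≃ᵢ E :=
  (IsometryEquiv.vaddConst q).symm.trans
    ((ℝ ∙ w)ᗮ.reflection.toIsometryEquiv.trans (IsometryEquiv.vaddConst q))

lemma hyperplaneReflection_apply (q w u : E) :
    hyperplaneReflection q w u = (ℝ ∙ w)ᗮ.reflection (u - q) + q := rfl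

lemma sub_hyperplaneReflection (q w u : E) :
    u - hyperplaneReflection q w u = (2 * (inner ℝ w (u - q) / ‖w‖ ^ 2)) • w := by
  rw [hyperplaneReflection_apply, Submodule.reflection_orthogonal_apply,
    Submodule.reflection_singleton_apply, RCLike.ofReal_real_eq_id, id, mul_smul]
  module

lemma inner_hyperplaneReflection_sub {q v w : E} (hvw : ‖v‖ = ‖w‖) (u : E) :
    inner ℝ w (hyperplaneReflection q (v - w) u - q) = inner ℝ v (u - q) := by
  rw [hyperplaneReflection_apply, add_sub_cancel_right, ← LinearIsometryEquiv.inner_map_map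
    (ℝ ∙ (v - w))ᗮ.reflection v, Submodule.reflection_sub hvw]

lemma hyperplaneReflection_preimage {W : Submodule ℝ E} {w : E} (hw : w ∈ W) (q : E) (t : ℝ) :
    hyperplaneReflection q w ⁻¹' (closedBall q t ∩ W) = closedBall q t ∩ W := by
  ext u
  refine and_congr ?_ ?_
  · rw [mem_closedBall_iff_norm, mem_closedBall_iff_norm, hyperplaneReflection_apply,
      add_sub_cancel_right, LinearIsometryEquiv.norm_map]
  · rw [SetLike.mem_coe, SetLike.mem_coe, ← sub_sub_cancel u (hyperplaneReflection q w u),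
      sub_hyperplaneReflection, W.sub_mem_iff_left (W.smul_mem _ hw)]

variable {P : AffineSubspace ℝ E} {W : Submodule ℝ E} {g : E → E} {K C : ℝ≥0} {q : E} {t : ℝ}

lemma mul_enorm_inner_sub_le [P.direction.HasOrthogonalProjection]
    (hg : LipschitzOnWith K g (closedBall q t ∩ W))
    (hKC : K * (Module.finrank ℝ W + C) + 1 ≤ C) {e : E} (he : e ∈ W) (he1 : ‖e‖ = 1)
    (hPe : C * ‖P.direction.starProjection e‖ ≤ 1) {u : E} (hu : u ∈ closedBall q t ∩ W) :
    2 * (K * Module.finrank ℝ W * ‖(inner ℝ e (u - q) : ℝ)‖ₑ) ≤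
      C * ‖P.directionᗮ.starProjection (u + g u -
        (hyperplaneReflection q e u + g (hyperplaneReflection q e u)))‖ₑ := by
  set v := hyperplaneReflection q e u with hv
  have hvS : v ∈ closedBall q t ∩ W := by
    rwa [← hyperplaneReflection_preimage he q t] at hu
  have huv : u - v = (2 * inner ℝ e (u - q)) • e := by
    rw [hv, sub_hyperplaneReflection, he1, one_pow, div_one]
  have hnorm : ‖u - v‖ = 2 * ‖(inner ℝ e (u - q) : ℝ)‖ := by
    rw [huv, norm_smul, he1, mul_one, norm_mul, Real.norm_two]
  have hPuv : C * ‖P.direction.starProjection (u - v)‖ ≤ ‖u - v‖ := by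
    rw [huv, map_smul, norm_smul, norm_smul, he1, mul_left_comm]
    gcongr
  have hguv : ‖g u - g v‖ ≤ K * ‖u - v‖ := by
    simpa only [dist_eq_norm] using hg.dist_le_mul u hu v hvS
  have hKC' : (K : ℝ) * Module.finrank ℝ W ≤ C - 1 - K * C := by
    have : (K : ℝ) * (Module.finrank ℝ W + C) + 1 ≤ C := by exact_mod_cast hKC
    linarith
  have hreal : 2 * (K * Module.finrank ℝ W * ‖(inner ℝ e (u - q) : ℝ)‖) ≤
      C * ‖P.directionᗮ.starProjection (u + g u - (v + g v))‖ := by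
    calc 2 * (K * Module.finrank ℝ W * ‖(inner ℝ e (u - q) : ℝ)‖)
        = K * Module.finrank ℝ W * ‖u - v‖ := by rw [hnorm, mul_left_comm]
      _ ≤ (C - 1 - K * C) * ‖u - v‖ := by gcongr
      _ ≤ C * ‖P.directionᗮ.starProjection (u - v + (g u - g v))‖ :=
        sub_mul_norm_le_mul_norm_starProjection_orthogonal C.coe_nonneg hPuv hguv
      _ = C * ‖P.directionᗮ.starProjection (u + g u - (v + g v))‖ := by
        rw [add_sub_add_comm]
  simp only [enorm_eq_nnnorm]
  exact_mod_cast hreal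

end Reflection

section Integral

lemma setLIntegral_comp_isometryEquiv {X : Type*} [EMetricSpace X] [MeasurableSpace X]
    [BorelSpace X] (ρ : X ≃ᵢ X) {S : Set X} (hρ : ρ ⁻¹' S = S) (d : ℝ) (f : X → ℝ≥0∞) :
    ∫⁻ u in S, f (ρ u) ∂μH[d] = ∫⁻ u in S, f u ∂μH[d] := by
  have h := (ρ.measurePreserving_hausdorffMeasure d).setLIntegral_comp_preimage_emb
    ρ.toHomeomorph.measurableEmbedding f S
  rwa [hρ] at h

lemma enorm_le_sum_enorm_inner {ι F : Type*} [Fintype ι] [NormedAddCommGroup F]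
    [InnerProductSpace ℝ F] (b : OrthonormalBasis ι ℝ F) (x : F) :
    ‖x‖ₑ ≤ ∑ i, ‖(inner ℝ (b i) x : ℝ)‖ₑ := by
  calc ‖x‖ₑ = ‖∑ i, (inner ℝ (b i) x : ℝ) • b i‖ₑ := by rw [b.sum_repr' x]
    _ ≤ ∑ i, ‖(inner ℝ (b i) x : ℝ) • b i‖ₑ := enorm_sum_le _ _
    _ = ∑ i, ‖(inner ℝ (b i) x : ℝ)‖ₑ := by
      refine Finset.sum_congr rfl fun i _ => ?_
      rw [enorm_smul, ← ofReal_norm (b i), b.norm_eq_one, ENNReal.ofReal_one, mul_one]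

variable {E : Type*} [NormedAddCommGroup E] [InnerProductSpace ℝ E] [MeasurableSpace E]
  [BorelSpace E] {W : Submodule ℝ E}

lemma measurableSet_closedBall_inter (W : Submodule ℝ E) [FiniteDimensional ℝ W] (q : E) (t : ℝ) :
    MeasurableSet (closedBall q t ∩ W) :=
  (isClosed_closedBall.inter W.closed_of_finiteDimensional).measurableSet

lemma setLIntegral_enorm_inner_sub_eq {v w : E} (hv : v ∈ W) (hw : w ∈ W) (hvw : ‖v‖ = ‖w‖)
    (q : E) (t d : ℝ) :
    ∫⁻ u in closedBall q t ∩ W, ‖(inner ℝ v (u - q) : ℝ)‖ₑ ∂μH[d] =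
      ∫⁻ u in closedBall q t ∩ W, ‖(inner ℝ w (u - q) : ℝ)‖ₑ ∂μH[d] := by
  rw [← setLIntegral_comp_isometryEquiv (hyperplaneReflection q (v - w))
    (hyperplaneReflection_preimage (W.sub_mem hv hw) q t) d fun u => ‖(inner ℝ w (u - q) : ℝ)‖ₑ]
  simp only [inner_hyperplaneReflection_sub hvw]

lemma setLIntegral_enorm_sub_le [FiniteDimensional ℝ W] {q e : E} (hq : q ∈ W) (he : e ∈ W)
    (he1 : ‖e‖ = 1) (t d : ℝ) :
    ∫⁻ u in closedBall q t ∩ W, ‖u - q‖ₑ ∂μH[d] ≤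
      Module.finrank ℝ W * ∫⁻ u in closedBall q t ∩ W, ‖(inner ℝ e (u - q) : ℝ)‖ₑ ∂μH[d] := by
  let b := stdOrthonormalBasis ℝ W
  have hb : ∀ u ∈ closedBall q t ∩ W, ‖u - q‖ₑ ≤ ∑ i, ‖(inner ℝ (b i : E) (u - q) : ℝ)‖ₑ :=
    fun u hu => enorm_le_sum_enorm_inner b ⟨u - q, W.sub_mem hu.2 hq⟩
  calc ∫⁻ u in closedBall q t ∩ W, ‖u - q‖ₑ ∂μH[d]
      ≤ ∫⁻ u in closedBall q t ∩ W, ∑ i, ‖(inner ℝ (b i : E) (u - q) : ℝ)‖ₑ ∂μH[d] :=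
        setLIntegral_mono' (measurableSet_closedBall_inter W q t) hb
    _ = ∑ i, ∫⁻ u in closedBall q t ∩ W, ‖(inner ℝ (b i : E) (u - q) : ℝ)‖ₑ ∂μH[d] :=
        lintegral_finsetSum _ fun i _ => Continuous.measurable (by fun_prop)
    _ = ∑ _i : Fin (Module.finrank ℝ W),
          ∫⁻ u in closedBall q t ∩ W, ‖(inner ℝ e (u - q) : ℝ)‖ₑ ∂μH[d] :=
        Finset.sum_congr rfl fun i _ => setLIntegral_enorm_inner_sub_eq (b i).2 he
          ((b.norm_eq_one i).trans he1.symm) q t d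
    _ = Module.finrank ℝ W *
          ∫⁻ u in closedBall q t ∩ W, ‖(inner ℝ e (u - q) : ℝ)‖ₑ ∂μH[d] := by
        rw [Finset.sum_const, Finset.card_univ, Fintype.card_fin, nsmul_eq_mul]

lemma setLIntegral_enorm_starProjection_orthogonal_sub_comp_le {X F : Type*} [EMetricSpace X]
    [MeasurableSpace X] [BorelSpace X] [NormedAddCommGroup F] [InnerProductSpace ℝ F]
    [MeasurableSpace F] [BorelSpace F] (P : AffineSubspace ℝ F)
    [P.direction.HasOrthogonalProjection] (ρ : X ≃ᵢ X) {S : Set X} (hρ : ρ ⁻¹' S = S) {d : ℝ}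
    {f : X → F} (hf : AEMeasurable f (μH[d].restrict S)) :
    ∫⁻ u in S, ‖P.directionᗮ.starProjection (f u - f (ρ u))‖ₑ ∂μH[d] ≤
      2 * ∫⁻ u in S, infEDist (f u) (P : Set F) ∂μH[d] := by
  have hdist : AEMeasurable (fun u => infEDist (f u) (P : Set F)) (μH[d].restrict S) :=
    measurable_infEDist.comp_aemeasurable hf
  calc ∫⁻ u in S, ‖P.directionᗮ.starProjection (f u - f (ρ u))‖ₑ ∂μH[d]
      ≤ ∫⁻ u in S, (infEDist (f u) P + infEDist (f (ρ u)) P) ∂μH[d] :=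
        lintegral_mono fun u =>
          enorm_starProjection_orthogonal_sub_le_infEDist_add P (f u) (f (ρ u))
    _ = 2 * ∫⁻ u in S, infEDist (f u) (P : Set F) ∂μH[d] := by
        rw [lintegral_add_left' hdist,
          setLIntegral_comp_isometryEquiv ρ hρ d fun x => infEDist (f x) P, two_mul]

variable {P : AffineSubspace ℝ E} {g : E → E} {K C : ℝ≥0} {q : E} {t : ℝ}

lemma setLIntegral_enorm_sub_center_le_inner [FiniteDimensional ℝ W]
    (hq : q ∈ W) (ht : 0 ≤ t) (d : ℝ) (hg : LipschitzOnWith K g (closedBall q t ∩ W))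
    {e : E} (he : e ∈ W) (he1 : ‖e‖ = 1) :
    ∫⁻ u in closedBall q t ∩ W, ‖g u - g q‖ₑ ∂μH[d] ≤
      K * Module.finrank ℝ W *
        ∫⁻ u in closedBall q t ∩ W, ‖(inner ℝ e (u - q) : ℝ)‖ₑ ∂μH[d] := by
  calc ∫⁻ u in closedBall q t ∩ W, ‖g u - g q‖ₑ ∂μH[d]
      ≤ ∫⁻ u in closedBall q t ∩ W, K * ‖u - q‖ₑ ∂μH[d] :=
        setLIntegral_mono' (measurableSet_closedBall_inter W q t) fun u hu => by
          simpa only [edist_eq_enorm_sub] using hg hu ⟨mem_closedBall_self ht, hq⟩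
    _ = K * ∫⁻ u in closedBall q t ∩ W, ‖u - q‖ₑ ∂μH[d] :=
        lintegral_const_mul' _ _ ENNReal.coe_ne_top
    _ ≤ K * Module.finrank ℝ W *
          ∫⁻ u in closedBall q t ∩ W, ‖(inner ℝ e (u - q) : ℝ)‖ₑ ∂μH[d] := by
        rw [mul_assoc]
        gcongr
        exact setLIntegral_enorm_sub_le hq he he1 t d

lemma setLIntegral_enorm_sub_center_le [P.direction.HasOrthogonalProjection]
    [FiniteDimensional ℝ W]
    (hq : q ∈ W) (ht : 0 ≤ t) (d : ℝ) (hg : LipschitzOnWith K g (closedBall q t ∩ W))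
    (hKC : K * (Module.finrank ℝ W + C) + 1 ≤ C) {e : E} (he : e ∈ W) (he1 : ‖e‖ = 1)
    (hPe : C * ‖P.direction.starProjection e‖ ≤ 1) :
    ∫⁻ u in closedBall q t ∩ W, ‖g u - g q‖ₑ ∂μH[d] ≤
      C * ∫⁻ u in closedBall q t ∩ W, infEDist (u + g u) (P : Set E) ∂μH[d] := by
  have hS := measurableSet_closedBall_inter W q t
  have hmeas : AEMeasurable (fun u => u + g u) (μH[d].restrict (closedBall q t ∩ W)) :=
    (continuousOn_id.add hg.continuousOn).aemeasurable hS
  refine (ENNReal.mul_le_mul_iff_right two_ne_zero ENNReal.ofNat_ne_top).1 ?_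
  calc 2 * ∫⁻ u in closedBall q t ∩ W, ‖g u - g q‖ₑ ∂μH[d]
      ≤ 2 * (K * Module.finrank ℝ W *
          ∫⁻ u in closedBall q t ∩ W, ‖(inner ℝ e (u - q) : ℝ)‖ₑ ∂μH[d]) := by
        gcongr
        exact setLIntegral_enorm_sub_center_le_inner hq ht d hg he he1
    _ = ∫⁻ u in closedBall q t ∩ W,
          2 * (K * Module.finrank ℝ W * ‖(inner ℝ e (u - q) : ℝ)‖ₑ) ∂μH[d] := by
        rw [lintegral_const_mul' _ _ ENNReal.ofNat_ne_top,
          lintegral_const_mul' _ _ (ENNReal.mul_ne_top ENNReal.coe_ne_top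
            (ENNReal.natCast_ne_top _))]
    _ ≤ ∫⁻ u in closedBall q t ∩ W, C * ‖P.directionᗮ.starProjection (u + g u -
          (hyperplaneReflection q e u + g (hyperplaneReflection q e u)))‖ₑ ∂μH[d] :=
        setLIntegral_mono' hS fun u hu => mul_enorm_inner_sub_le hg hKC he he1 hPe hu
    _ = C * ∫⁻ u in closedBall q t ∩ W, ‖P.directionᗮ.starProjection (u + g u -
          (hyperplaneReflection q e u + g (hyperplaneReflection q e u)))‖ₑ ∂μH[d] :=
        lintegral_const_mul' _ _ ENNReal.coe_ne_top
    _ ≤ C * (2 * ∫⁻ u in closedBall q t ∩ W, infEDist (u + g u) (P : Set E) ∂μH[d]) := by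
        gcongr
        exact setLIntegral_enorm_starProjection_orthogonal_sub_comp_le P _
          (hyperplaneReflection_preimage he q t) hmeas
    _ = 2 * (C * ∫⁻ u in closedBall q t ∩ W, infEDist (u + g u) (P : Set E) ∂μH[d]) :=
        mul_left_comm _ _ _

lemma exists_affineMap_setLIntegral_enorm_sub_le [FiniteDimensional ℝ E]
    (hP : (P : Set E).Nonempty) (hdim : Module.finrank ℝ W = Module.finrank ℝ P.direction)
    (hq : q ∈ W) (ht : 0 ≤ t) (d : ℝ)
    (hgW : ∀ u ∈ closedBall q t ∩ W, g u ∈ Wᗮ)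
    (hg : LipschitzOnWith K g (closedBall q t ∩ W))
    (hKC : K * (Module.finrank ℝ W + C) + 1 ≤ C) :
    ∃ a : E →ᵃ[ℝ] E, (∀ v, a v ∈ Wᗮ) ∧ ∫⁻ u in closedBall q t ∩ W, ‖g u - a u‖ₑ ∂μH[d] ≤
      C * ∫⁻ u in closedBall q t ∩ W, infEDist (u + g u) (P : Set E) ∂μH[d] := by
  by_cases hflat : ∀ e ∈ W, ‖e‖ ≤ C * ‖P.direction.starProjection e‖
  · obtain ⟨a, haW, ha⟩ := exists_affineMap_enorm_sub_le_mul_infEDist hP hdim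
      (le_add_self.trans hKC) hflat
    refine ⟨a, haW, ?_⟩
    rw [← lintegral_const_mul' _ _ ENNReal.coe_ne_top]
    exact setLIntegral_mono' (measurableSet_closedBall_inter W q t)
      fun u hu => ha u (g u) (hgW u hu)
  · push Not at hflat
    obtain ⟨e, he, hlt⟩ := hflat
    have he0 : 0 < ‖e‖ := lt_of_le_of_lt (by positivity) hlt
    refine ⟨AffineMap.const ℝ E (g q), fun _ => hgW q ⟨mem_closedBall_self ht, hq⟩, ?_⟩
    refine setLIntegral_enorm_sub_center_le hq ht d hg hKC (W.smul_mem ‖e‖⁻¹ he)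
      (norm_smul_inv_norm (𝕜 := ℝ) (norm_pos_iff.1 he0)) ?_
    rw [map_smul, norm_smul, norm_inv, norm_norm, mul_left_comm, inv_mul_le_one₀ he0]
    exact hlt.le

end Integral

section Gamma

lemma lintegral_ofReal_div {X : Type*} [MeasurableSpace X] (μ : Measure X) (f : X → ℝ) {t : ℝ}
    (ht : 0 < t) :
    ∫⁻ x, ENNReal.ofReal (f x / t) ∂μ = (∫⁻ x, ENNReal.ofReal (f x) ∂μ) / ENNReal.ofReal t := by
  simp only [ENNReal.ofReal_div_of_pos ht]
  simp only [div_eq_mul_inv]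
  exact lintegral_mul_const' _ _ (ENNReal.inv_ne_top.2 (ENNReal.ofReal_pos.2 ht).ne')

theorem gamma_le_three_gammaTilde_general {N n : ℕ}
    {P₀ : Submodule ℝ (EuclideanSpace ℝ (Fin N))} (hP₀ : Module.finrank ℝ P₀ = n)
    {q : EuclideanSpace ℝ (Fin N)} (hq : q ∈ P₀) {t : ℝ} (ht : 0 < t)
    {g : EuclideanSpace ℝ (Fin N) → EuclideanSpace ℝ (Fin N)}
    (hgval : ∀ u ∈ closedBall q t ∩ P₀, g u ∈ P₀ᗮ) {K C : ℝ≥0}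
    (hg : LipschitzOnWith K g (closedBall q t ∩ P₀)) (hKC : K * (n + C) + 1 ≤ C) :
    gammaFn N n P₀ g q t ≤ C * gammaTilde N n P₀ g q t := by
  have hC : (C : ℝ≥0∞) ≠ 0 :=
    ENNReal.coe_ne_zero.2 (zero_lt_one.trans_le (le_add_self.trans hKC)).ne'
  simp only [gammaTilde, ENNReal.mul_iInf_of_ne hC ENNReal.coe_ne_top]
  refine le_iInf₂ fun P ⟨hPne, hPdim⟩ => ?_
  obtain ⟨a, haP₀, ha⟩ := exists_affineMap_setLIntegral_enorm_sub_le hPne (hP₀.trans hPdim.symm)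
    hq ht.le n hgval hg (hP₀ ▸ hKC)
  refine (iInf₂_le a haP₀).trans ?_
  simp only [lintegral_ofReal_div _ _ ht, ofReal_norm, infDist,
    ENNReal.ofReal_toReal (infEDist_ne_top hPne)]
  rw [mul_left_comm, ← mul_div_assoc (C : ℝ≥0∞)]
  gcongr

end Gamma

/-- **Lemma.** Let `P₀` be an `n`-dimensional linear subspace of `ℝ^N`, `U ⊆ P₀`,
`q ∈ U`, `t > 0` with `B(q,t) ∩ P₀ ⊆ U`, and let `g : U → P₀ᗮ` be Lipschitz with constant
`L` satisfying `60n(10^n+1)(8n ω_{n−1}/ω_n)^{n+1} ≤ 1/L`.  Then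
`γ_g(q,t) ≤ 3 γ̃_g(q,t)`. -/
theorem gamma_le_three_gammaTilde {N n : ℕ} (hn : 1 ≤ n) (hnN : n < N)
    (P₀ : Submodule ℝ (EuclideanSpace ℝ (Fin N))) (hP₀ : Module.finrank ℝ P₀ = n)
    (U : Set (EuclideanSpace ℝ (Fin N))) (hU : U ⊆ (P₀ : Set (EuclideanSpace ℝ (Fin N))))
    (q : EuclideanSpace ℝ (Fin N)) (hq : q ∈ U) (t : ℝ) (ht : 0 < t)
    (hBU : Metric.closedBall q t ∩ (P₀ : Set (EuclideanSpace ℝ (Fin N))) ⊆ U)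
    (g : EuclideanSpace ℝ (Fin N) → EuclideanSpace ℝ (Fin N))
    (hgval : ∀ u ∈ U, g u ∈ P₀ᗮ)
    (L : ℝ) (hL : 0 < L)
    (hLip : ∀ u ∈ U, ∀ v ∈ U, ‖g u - g v‖ ≤ L * ‖u - v‖)
    (hLbound : 60 * n * ((10 : ℝ) ^ n + 1) *
        (8 * n * unitBallVol (n - 1) / unitBallVol n) ^ (n + 1) ≤ 1 / L) :
    gammaFn N n P₀ g q t ≤ 3 * gammaTilde N n P₀ g q t := by
  lift L to ℝ≥0 using hL.le
  refine gamma_le_three_gammaTilde_general hP₀ (hU hq) ht (fun u hu => hgval u (hBU hu))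
    (LipschitzOnWith.of_dist_le_mul fun u hu v hv => ?_)
    (mul_add_three_add_one_le_of_lipschitz_bound hn (NNReal.coe_pos.1 hL) hLbound)
  simpa only [dist_eq_norm] using hLip u (hBU hu) v (hBU hv)

end
end
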